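/- There is a predicate formula deducible in the calculus MQC but not deducible in the classical predicate calculus CQC; namely the formula Ψ* = (Q → Ψ), where Ψ is ¬∀x(¬Φ(x) ∨ Φ(x)) with Φ(x) the formula ∃y(Z(y) & G(x,x,y)), and Z,E,S,A,M are treated as predicate variables. -/

import Mathlib

set_option linter.unusedVariables false

namespace Cpc

/-! ### Recursion-theoretic preliminaries -/

/-- Kleene application `{e}(a)`: the unary partial recursive function with Gödel number `e`,
applied to `a`. -/
def K (e a : ℕ) : Part ℕ := Nat.Partrec.Code.eval (Denumerable.ofNat Nat.Partrec.Code e) a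

/-- `(e)ᵢ`: the exponent of the `i`-th prime in the prime factorization of `e`. -/
noncomputable def pexp (i e : ℕ) : ℕ := Nat.factorization e (Nat.nth Nat.Prime i)

/-! ### The Cantor pairing function and the enumeration `g` of finitely supported functions -/

/-- The Cantor pairing `c(x,y) = (x+y)(x+y+1)/2 + x`. -/
def cpair (x y : ℕ) : ℕ := (x + y) * (x + y + 1) / 2 + x

/-- Simultaneous computation of the two inverse projections of the Cantor pairing. -/
def lrAux : ℕ → ℕ × ℕ
  | 0 => (0, 0)
  | n + 1 =>
    let p := lrAux n
    if p.2 = 0 then (0, p.1 + 1) else (p.1 + 1, p.2 - 1)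

/-- The first projection `l` of the Cantor pairing. -/
def cl (n : ℕ) : ℕ := (lrAux n).1

/-- The second projection `r` of the Cantor pairing. -/
def cr (n : ℕ) : ℕ := (lrAux n).2

/-- `l*(x,y)`: `l*(x,0) = x`, `l*(x,y+1) = l(l*(x,y))`. -/
def lstar (x : ℕ) : ℕ → ℕ
  | 0 => x
  | y + 1 => cl (lstar x y)

/-- `g(x,y) = r(l*(x,y))`: the enumeration of all finitely supported functions `ℕ → ℕ`. -/
def g (x y : ℕ) : ℕ := cr (lstar x y)

/-- `h(x,y,0) = c(l(x),y)`, `h(x,y,z+1) = c(h(l(x),y,z), r(x))`. -/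
def h : ℕ → ℕ → ℕ → ℕ
  | x, y, 0 => cpair (cl x) y
  | x, y, z + 1 => cpair (h (cl x) y z) (cr x)


/-! ### The predicate language `L*` -/

/-- Individual terms of the language `L*`: individual variables (named by natural numbers)
and individual constants for all natural numbers. -/
inductive PTerm : Type
  | var (v : ℕ)
  | const (c : ℕ)
  deriving DecidableEq

/-- Evaluation of a term under a valuation of the individual variables. -/
def PTerm.eval (ρ : ℕ → ℕ) : PTerm → ℕ
  | var v => ρ v
  | const c => c

/-- The (free) variables of a term. -/
def PTerm.fv : PTerm → Finset ℕ
  | var v => {v}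
  | const _ => ∅

/-- Formulas of the predicate language `L*`: `⊥`, atomic formulas `Pⁿᵢ(t₁,…,tₙ)`
(where the predicate variable `Pⁿᵢ` is recorded by its index `i`; its arity `n` is the
length of the argument list), and the connectives and quantifiers. -/
inductive PFml : Type
  | bot
  | atom (i : ℕ) (args : List PTerm)
  | and (φ ψ : PFml)
  | or (φ ψ : PFml)
  | imp (φ ψ : PFml)
  | all (x : ℕ) (φ : PFml)
  | ex (x : ℕ) (φ : PFml)

/-- `¬Φ` abbreviates `Φ → ⊥`. -/
def PFml.not (φ : PFml) : PFml := φ.imp .bot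

/-- `Φ ↔ Ψ` abbreviates `(Φ → Ψ) & (Ψ → Φ)`. -/
def PFml.iff (φ ψ : PFml) : PFml := (φ.imp ψ).and (ψ.imp φ)

/-- Conjunction of a list of formulas. -/
def bigAnd (l : List PFml) : PFml := l.foldr PFml.and (PFml.bot.imp PFml.bot)

/-- The free variables of a formula. -/
def PFml.fv : PFml → Finset ℕ
  | bot => ∅
  | atom _ args => args.foldr (fun t s => t.fv ∪ s) ∅
  | and φ ψ => φ.fv ∪ ψ.fv
  | or φ ψ => φ.fv ∪ ψ.fv
  | imp φ ψ => φ.fv ∪ ψ.fv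
  | all x φ => φ.fv.erase x
  | ex x φ => φ.fv.erase x

/-- The bound variables of a formula. -/
def PFml.bv : PFml → Finset ℕ
  | bot => ∅
  | atom _ _ => ∅
  | and φ ψ => φ.bv ∪ ψ.bv
  | or φ ψ => φ.bv ∪ ψ.bv
  | imp φ ψ => φ.bv ∪ ψ.bv
  | all x φ => insert x φ.bv
  | ex x φ => insert x φ.bv

/-- A formula is closed if it has no free variables. -/
def PFml.Closed (φ : PFml) : Prop := φ.fv = ∅

/-- Simultaneous substitution of terms for variables in a term. -/
def PTerm.msub (s : ℕ → PTerm) : PTerm → PTerm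
  | var v => s v
  | const c => const c

/-- Simultaneous (naive, i.e. non-capture-avoiding) substitution of terms for the free
occurrences of variables in a formula. -/
def PFml.msub (s : ℕ → PTerm) : PFml → PFml
  | bot => bot
  | atom i args => atom i (args.map (PTerm.msub s))
  | and φ ψ => (φ.msub s).and (ψ.msub s)
  | or φ ψ => (φ.msub s).or (ψ.msub s)
  | imp φ ψ => (φ.msub s).imp (ψ.msub s)
  | all x φ => all x (φ.msub fun v => if v = x then .var x else s v)
  | ex x φ => ex x (φ.msub fun v => if v = x then .var x else s v)

/-- The substitution replacing the single variable `x` by the term `t`. -/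
def sub1 (x : ℕ) (t : PTerm) : ℕ → PTerm := fun v => if v = x then t else .var v

/-- The simultaneous substitution `s` is free for (admissible in) the formula, i.e. no
variable of a substituted term gets captured by a quantifier. -/
def PFml.FreeForM (s : ℕ → PTerm) : PFml → Prop
  | bot => True
  | atom _ _ => True
  | and φ ψ => φ.FreeForM s ∧ ψ.FreeForM s
  | or φ ψ => φ.FreeForM s ∧ ψ.FreeForM s
  | imp φ ψ => φ.FreeForM s ∧ ψ.FreeForM s
  | all x φ => (∀ v ∈ φ.fv, v ≠ x → x ∉ (s v).fv) ∧
      φ.FreeForM (fun v => if v = x then .var x else s v)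
  | ex x φ => (∀ v ∈ φ.fv, v ≠ x → x ∉ (s v).fv) ∧
      φ.FreeForM (fun v => if v = x then .var x else s v)

/-! ### Interpretations and realizability -/

/-- An `n`-ary generalized predicate. -/
def GenPred (n : ℕ) : Type := (Fin n → ℕ) → Set ℕ

/-- An interpretation assigns to each predicate variable `Pⁿᵢ` an `n`-ary generalized
predicate. -/
def Interp : Type := (n : ℕ) → ℕ → GenPred n

/-- The realizability relation `e rᶠ Φ` (relative to a valuation `ρ` of the individual
variables). -/
def Realizes (f : Interp) : (ℕ → ℕ) → ℕ → PFml → Prop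
  | _, _, .bot => False
  | ρ, e, .atom i args => e ∈ f args.length i (fun j => (args.get j).eval ρ)
  | ρ, e, .and φ ψ => Realizes f ρ (pexp 0 e) φ ∧ Realizes f ρ (pexp 1 e) ψ
  | ρ, e, .or φ ψ => (pexp 0 e = 0 ∧ Realizes f ρ (pexp 1 e) φ) ∨
      (pexp 0 e = 1 ∧ Realizes f ρ (pexp 1 e) ψ)
  | ρ, e, .imp φ ψ => ∀ a, Realizes f ρ a φ → ∃ b ∈ K e a, Realizes f ρ b ψ
  | ρ, e, .all x φ => ∀ a, ∃ b ∈ K e a, Realizes f (Function.update ρ x a) b φ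
  | ρ, e, .ex x φ => Realizes f (Function.update ρ x (pexp 0 e)) (pexp 1 e) φ

/-- The zero valuation, used for closed formulas. -/
def rho0 : ℕ → ℕ := fun _ => 0

/-- The closed formula `Φ` is realizable in the interpretation `f`. -/
def FRealizable (f : Interp) (φ : PFml) : Prop := ∃ e, Realizes f rho0 e φ

/-- The closed predicate formula `Φ` is (uniformly) absolutely realizable. -/
def AbsRealizable (φ : PFml) : Prop := ∃ e, ∀ f : Interp, Realizes f rho0 e φ


/-! ### The arithmetical fragment: `Z,E,S,A,M` are the predicate variables
`P¹₀, P²₀, P²₁, P³₀, P³₁`. -/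

/-- `Z(t)`, i.e. the atomic formula `P¹₀(t)`. -/
def vZ (t : PTerm) : PFml := .atom 0 [t]
/-- `E(t,u)`, i.e. `P²₀(t,u)`. -/
def vE (t u : PTerm) : PFml := .atom 0 [t, u]
/-- `S(t,u)`, i.e. `P²₁(t,u)`. -/
def vS (t u : PTerm) : PFml := .atom 1 [t, u]
/-- `A(t,u,w)`, i.e. `P³₀(t,u,w)`. -/
def vA (t u w : PTerm) : PFml := .atom 0 [t, u, w]
/-- `M(t,u,w)`, i.e. `P³₁(t,u,w)`. -/
def vM (t u w : PTerm) : PFml := .atom 1 [t, u, w]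

/-- The standard reading of the arithmetical predicate symbols. -/
def arithStd : (n : ℕ) → ℕ → (Fin n → ℕ) → Prop
  | 1, 0, v => v 0 = 0
  | 2, 0, v => v 0 = v 1
  | 2, 1, v => v 0 + 1 = v 1
  | 3, 0, v => v 0 + v 1 = v 2
  | 3, 1, v => v 0 * v 1 = v 2
  | _, _, _ => False

/-- The standard interpretation: an atomic arithmetical statement is realized by `e`
iff `e = 0` and the statement is true. -/
def stdInterp : Interp := fun n i v => {e | e = 0 ∧ arithStd n i v}

/-- Classical truth of an arithmetical formula in the standard model (atoms of
non-arithmetical predicate variables are read as false). -/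
def TrueStd : (ℕ → ℕ) → PFml → Prop
  | _, .bot => False
  | ρ, .atom i args => arithStd args.length i (fun j => (args.get j).eval ρ)
  | ρ, .and φ ψ => TrueStd ρ φ ∧ TrueStd ρ ψ
  | ρ, .or φ ψ => TrueStd ρ φ ∨ TrueStd ρ ψ
  | ρ, .imp φ ψ => TrueStd ρ φ → TrueStd ρ ψ
  | ρ, .all x φ => ∀ a, TrueStd (Function.update ρ x a) φ
  | ρ, .ex x φ => ∃ a, TrueStd (Function.update ρ x a) φ

/-- The pairs (arity, index) naming the arithmetical predicate symbols `Z,E,S,A,M`. -/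
def arithSlot (n i : ℕ) : Prop := (n = 1 ∧ i = 0) ∨ (n = 2 ∧ i ≤ 1) ∨ (n = 3 ∧ i ≤ 1)

/-- The `Ar`-formula `x ≤ t`, i.e. `∃z A(z,x,t)`. -/
def leF (z x : ℕ) (t : PTerm) : PFml := .ex z (vA (.var z) (.var x) t)

/-- `Δ₀`-formulas of the language `Ar`. -/
inductive IsDelta0 : PFml → Prop
  | bot : IsDelta0 .bot
  | atom {i : ℕ} {args : List PTerm} : arithSlot args.length i → IsDelta0 (.atom i args)
  | and {φ ψ} : IsDelta0 φ → IsDelta0 ψ → IsDelta0 (φ.and ψ)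
  | or {φ ψ} : IsDelta0 φ → IsDelta0 ψ → IsDelta0 (φ.or ψ)
  | imp {φ ψ} : IsDelta0 φ → IsDelta0 ψ → IsDelta0 (φ.imp ψ)
  | ball {x z : ℕ} {t : PTerm} {φ} : x ∉ t.fv → z ∉ t.fv → z ≠ x → IsDelta0 φ →
      IsDelta0 (.all x ((leF z x t).imp φ))
  | bex {x z : ℕ} {t : PTerm} {φ} : x ∉ t.fv → z ∉ t.fv → z ≠ x → IsDelta0 φ →
      IsDelta0 (.ex x ((leF z x t).and φ))

/-- `Σ`-formulas of the language `Ar`. -/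
inductive IsSigma : PFml → Prop
  | delta0 {φ} : IsDelta0 φ → IsSigma φ
  | and {φ ψ} : IsSigma φ → IsSigma ψ → IsSigma (φ.and ψ)
  | or {φ ψ} : IsSigma φ → IsSigma ψ → IsSigma (φ.or ψ)
  | ball {x z : ℕ} {t : PTerm} {φ} : x ∉ t.fv → z ∉ t.fv → z ≠ x → IsSigma φ →
      IsSigma (.all x ((leF z x t).imp φ))
  | bex {x z : ℕ} {t : PTerm} {φ} : x ∉ t.fv → z ∉ t.fv → z ≠ x → IsSigma φ →
      IsSigma (.ex x ((leF z x t).and φ))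
  | ex {x : ℕ} {φ} : IsSigma φ → IsSigma (.ex x φ)




/-- Iterated universal quantification. -/
def alls (xs : List ℕ) (φ : PFml) : PFml := xs.foldr PFml.all φ

open PTerm (var const) in
/-- The axioms `A₁ – A₂₅` of the predicate version `IRA*` of intuitionistic Robinson
arithmetic. -/
def IRAstarAxioms : List PFml := [
  alls [0,1,2] (((vS (var 0) (var 2)).and (vS (var 1) (var 2))).imp (vE (var 0) (var 1))),
  alls [0,1] ((vS (var 0) (var 1)).imp (vZ (var 1)).not),
  alls [0,1,2] (((vE (var 0) (var 1)).and (vE (var 0) (var 2))).imp (vE (var 1) (var 2))),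
  alls [0,1,2] (((vE (var 0) (var 1)).and (vS (var 0) (var 2))).imp (vS (var 1) (var 2))),
  alls [0,1] ((vZ (var 1)).imp (vA (var 0) (var 1) (var 0))),
  alls [0,1,2,3,4] ((((vS (var 1) (var 2)).and (vA (var 0) (var 1) (var 3))).and
      (vS (var 3) (var 4))).imp (vA (var 0) (var 2) (var 4))),
  alls [0,1] ((vZ (var 1)).imp (vM (var 0) (var 1) (var 1))),
  alls [0,1,2,3,4] ((((vS (var 1) (var 2)).and (vM (var 0) (var 1) (var 3))).and
      (vA (var 3) (var 0) (var 4))).imp (vM (var 0) (var 2) (var 4))),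
  alls [0,1,2,3] (((vE (var 0) (var 1)).and (vA (var 0) (var 2) (var 3))).imp
      (vA (var 1) (var 2) (var 3))),
  alls [0,1,2,3] (((vE (var 1) (var 2)).and (vA (var 0) (var 1) (var 3))).imp
      (vA (var 0) (var 2) (var 3))),
  alls [0,1,2,3] (((vE (var 0) (var 1)).and (vM (var 0) (var 2) (var 3))).imp
      (vM (var 1) (var 2) (var 3))),
  alls [0,1,2,3] (((vE (var 1) (var 2)).and (vM (var 0) (var 1) (var 3))).imp
      (vM (var 0) (var 2) (var 3))),
  PFml.all 0 ((vZ (var 0)).or (.ex 1 (vS (var 1) (var 0)))),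
  PFml.ex 0 (vZ (var 0)),
  alls [0,1] (((vZ (var 0)).and (vZ (var 1))).imp (vE (var 0) (var 1))),
  alls [0,1] (((vE (var 0) (var 1)).and (vZ (var 0))).imp (vZ (var 1))),
  PFml.all 0 (.ex 1 (vS (var 0) (var 1))),
  alls [0,1,2] (((vS (var 0) (var 1)).and (vS (var 0) (var 2))).imp (vE (var 1) (var 2))),
  alls [0,1,2] (((vS (var 0) (var 1)).and (vE (var 1) (var 2))).imp (vS (var 0) (var 2))),
  alls [0,1] (.ex 2 (vA (var 0) (var 1) (var 2))),
  alls [0,1,2,3] (((vA (var 0) (var 1) (var 2)).and (vA (var 0) (var 1) (var 3))).imp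
      (vE (var 2) (var 3))),
  alls [0,1,2,3] (((vA (var 0) (var 1) (var 2)).and (vE (var 2) (var 3))).imp
      (vA (var 0) (var 1) (var 3))),
  alls [0,1] (.ex 2 (vM (var 0) (var 1) (var 2))),
  alls [0,1,2,3] (((vM (var 0) (var 1) (var 2)).and (vM (var 0) (var 1) (var 3))).imp
      (vE (var 2) (var 3))),
  alls [0,1,2,3] (((vM (var 0) (var 1) (var 2)).and (vE (var 2) (var 3))).imp
      (vM (var 0) (var 1) (var 3)))]

/-- `A₂₆`: functionality of the formula `G`:
`∀x,y,z₁,z₂ (G(x,y,z₁) & G(x,y,z₂) → E(z₁,z₂))`. Here `G = G(x,y,z)` has distinguished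
free variables `0,1,2` playing the role of `x,y,z`. -/
def A26 (G : PFml) : PFml :=
  alls [0,1,2,3] ((G.and (G.msub (sub1 2 (.var 3)))).imp (vE (.var 2) (.var 3)))

/-- `H(y,x)`, i.e. `∃w(Z(w) & G(y,x,w))`, expressing `{y}(x) = 0`; here `y,x` are the
variables `1,0` and `w` is the fresh variable `5`. -/
def Hfml (G : PFml) : PFml :=
  .ex 5 ((vZ (.var 5)).and (G.msub fun v =>
    if v = 0 then .var 1 else if v = 1 then .var 0 else if v = 2 then .var 5 else .var v))

/-- `B(v,x)` with `v,x` the variables `4,0`; here `B = B(v,x)` has distinguished free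
variables `0,1` playing the role of `v,x`. -/
def B40 (B : PFml) : PFml :=
  B.msub fun v => if v = 0 then .var 4 else if v = 1 then .var 0 else .var v

/-- `A₂₇`: `∀y,z ¬¬∃v ∀x (x ≤ z → (B(v,x) ↔ H(y,x)))`. -/
def A27 (G B : PFml) : PFml :=
  alls [1,2] (PFml.not (PFml.not (.ex 4 (.all 0
    ((leF 6 0 (.var 2)).imp ((B40 B).iff (Hfml G)))))))

/-- `A₂₈`: `∀x,y (B(x,y) ∨ ¬B(x,y))`. -/
def A28 (B : PFml) : PFml := alls [0,1] (B.or B.not)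

/-- `Q`: the conjunction of the formulas `A₁ – A₂₈`. -/
def Qfml (G B : PFml) : PFml := bigAnd (IRAstarAxioms ++ [A26 G, A27 G B, A28 B])

/-- The formula `[n](t)`: `[0](t) = Z(t)`, `[n+1](t) = ∃xₙ([n](xₙ) & S(xₙ,t))`. -/
def numFt : ℕ → PTerm → PFml
  | 0, t => vZ t
  | n + 1, t => .ex n ((numFt n (.var n)).and (vS (.var n) t))



/-- The axiom of equality for the predicate variable `Pⁿᵢ`:
`∀x⃗ ∀y⃗ (E(x₁,y₁) & … & E(xₙ,yₙ) → (P(x⃗) → P(y⃗)))`. -/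
def eqAx (n i : ℕ) : PFml :=
  alls ((List.range n) ++ (List.range n).map (· + n))
    ((bigAnd ((List.range n).map fun j => vE (.var j) (.var (n + j)))).imp
      ((PFml.atom i ((List.range n).map PTerm.var)).imp
        (PFml.atom i ((List.range n).map fun j => PTerm.var (n + j)))))




/-- Schemes over the arithmetical language: formulas of the language `LS*`, whose
atoms are either arithmetical atoms built from the predicate symbols `Z,E,S,A,M` of
`Ar`, or atoms built from the predicate variables `Pⁿᵢ`. -/
inductive Scheme : Type
  | bot
  | sZ (t : PTerm)
  | sE (t u : PTerm)
  | sS (t u : PTerm)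
  | sA (t u w : PTerm)
  | sM (t u w : PTerm)
  | patom (i : ℕ) (args : List PTerm)
  | and (φ ψ : Scheme)
  | or (φ ψ : Scheme)
  | imp (φ ψ : Scheme)
  | all (x : ℕ) (φ : Scheme)
  | ex (x : ℕ) (φ : Scheme)

def Scheme.not (φ : Scheme) : Scheme := φ.imp .bot
def Scheme.iff (φ ψ : Scheme) : Scheme := (φ.imp ψ).and (ψ.imp φ)

def Scheme.fv : Scheme → Finset ℕ
  | bot => ∅
  | sZ t => t.fv
  | sE t u => t.fv ∪ u.fv
  | sS t u => t.fv ∪ u.fv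
  | sA t u w => t.fv ∪ u.fv ∪ w.fv
  | sM t u w => t.fv ∪ u.fv ∪ w.fv
  | patom _ args => args.foldr (fun t s => t.fv ∪ s) ∅
  | and φ ψ => φ.fv ∪ ψ.fv
  | or φ ψ => φ.fv ∪ ψ.fv
  | imp φ ψ => φ.fv ∪ ψ.fv
  | all x φ => φ.fv.erase x
  | ex x φ => φ.fv.erase x

/-- All individual variables occurring in a scheme (free or bound). -/
def Scheme.vars : Scheme → Finset ℕ
  | bot => ∅
  | sZ t => t.fv
  | sE t u => t.fv ∪ u.fv
  | sS t u => t.fv ∪ u.fv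
  | sA t u w => t.fv ∪ u.fv ∪ w.fv
  | sM t u w => t.fv ∪ u.fv ∪ w.fv
  | patom _ args => args.foldr (fun t s => t.fv ∪ s) ∅
  | and φ ψ => φ.vars ∪ ψ.vars
  | or φ ψ => φ.vars ∪ ψ.vars
  | imp φ ψ => φ.vars ∪ ψ.vars
  | all x φ => insert x φ.vars
  | ex x φ => insert x φ.vars

def Scheme.bv : Scheme → Finset ℕ
  | and φ ψ => φ.bv ∪ ψ.bv
  | or φ ψ => φ.bv ∪ ψ.bv
  | imp φ ψ => φ.bv ∪ ψ.bv
  | all x φ => insert x φ.bv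
  | ex x φ => insert x φ.bv
  | _ => ∅

def Scheme.Closed (φ : Scheme) : Prop := φ.fv = ∅

/-- The predicate variables (arity, index) occurring in a scheme. -/
def Scheme.pvars : Scheme → Finset (ℕ × ℕ)
  | patom i args => {(args.length, i)}
  | and φ ψ => φ.pvars ∪ ψ.pvars
  | or φ ψ => φ.pvars ∪ ψ.pvars
  | imp φ ψ => φ.pvars ∪ ψ.pvars
  | all _ φ => φ.pvars
  | ex _ φ => φ.pvars
  | _ => ∅

def Scheme.msub (s : ℕ → PTerm) : Scheme → Scheme
  | bot => bot
  | sZ t => sZ (t.msub s)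
  | sE t u => sE (t.msub s) (u.msub s)
  | sS t u => sS (t.msub s) (u.msub s)
  | sA t u w => sA (t.msub s) (u.msub s) (w.msub s)
  | sM t u w => sM (t.msub s) (u.msub s) (w.msub s)
  | patom i args => patom i (args.map (PTerm.msub s))
  | and φ ψ => (φ.msub s).and (ψ.msub s)
  | or φ ψ => (φ.msub s).or (ψ.msub s)
  | imp φ ψ => (φ.msub s).imp (ψ.msub s)
  | all x φ => all x (φ.msub fun v => if v = x then .var x else s v)
  | ex x φ => ex x (φ.msub fun v => if v = x then .var x else s v)

def Scheme.FreeForM (s : ℕ → PTerm) : Scheme → Prop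
  | and φ ψ => φ.FreeForM s ∧ ψ.FreeForM s
  | or φ ψ => φ.FreeForM s ∧ ψ.FreeForM s
  | imp φ ψ => φ.FreeForM s ∧ ψ.FreeForM s
  | all x φ => (∀ v ∈ φ.fv, v ≠ x → x ∉ (s v).fv) ∧
      φ.FreeForM (fun v => if v = x then .var x else s v)
  | ex x φ => (∀ v ∈ φ.fv, v ≠ x → x ∉ (s v).fv) ∧
      φ.FreeForM (fun v => if v = x then .var x else s v)
  | _ => True

/-- Realizability of schemes: arithmetical atoms are realized by `e` iff `e = 0` and the
atom is true in the standard model; atoms of predicate variables are interpreted by `f`. -/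
def SReal (f : Interp) : (ℕ → ℕ) → ℕ → Scheme → Prop
  | _, _, .bot => False
  | ρ, e, .sZ t => e = 0 ∧ t.eval ρ = 0
  | ρ, e, .sE t u => e = 0 ∧ t.eval ρ = u.eval ρ
  | ρ, e, .sS t u => e = 0 ∧ t.eval ρ + 1 = u.eval ρ
  | ρ, e, .sA t u w => e = 0 ∧ t.eval ρ + u.eval ρ = w.eval ρ
  | ρ, e, .sM t u w => e = 0 ∧ t.eval ρ * u.eval ρ = w.eval ρ
  | ρ, e, .patom i args => e ∈ f args.length i (fun j => (args.get j).eval ρ)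
  | ρ, e, .and φ ψ => SReal f ρ (pexp 0 e) φ ∧ SReal f ρ (pexp 1 e) ψ
  | ρ, e, .or φ ψ => (pexp 0 e = 0 ∧ SReal f ρ (pexp 1 e) φ) ∨
      (pexp 0 e = 1 ∧ SReal f ρ (pexp 1 e) ψ)
  | ρ, e, .imp φ ψ => ∀ a, SReal f ρ a φ → ∃ b ∈ K e a, SReal f ρ b ψ
  | ρ, e, .all x φ => ∀ a, ∃ b ∈ K e a, SReal f (Function.update ρ x a) b φ
  | ρ, e, .ex x φ => SReal f (Function.update ρ x (pexp 0 e)) (pexp 1 e) φ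

/-- A closed scheme is uniformly absolutely realizable if a single `e` realizes it in
every interpretation. -/
def AbsRealizableS (φ : Scheme) : Prop := ∃ e, ∀ f : Interp, SReal f rho0 e φ

/-- Classical truth of a scheme with no predicate variables (arithmetical formula)
in the standard model. -/
def STrue : (ℕ → ℕ) → Scheme → Prop
  | _, .bot => False
  | ρ, .sZ t => t.eval ρ = 0
  | ρ, .sE t u => t.eval ρ = u.eval ρ
  | ρ, .sS t u => t.eval ρ + 1 = u.eval ρ
  | ρ, .sA t u w => t.eval ρ + u.eval ρ = w.eval ρ
  | ρ, .sM t u w => t.eval ρ * u.eval ρ = w.eval ρ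
  | _, .patom _ _ => False
  | ρ, .and φ ψ => STrue ρ φ ∧ STrue ρ ψ
  | ρ, .or φ ψ => STrue ρ φ ∨ STrue ρ ψ
  | ρ, .imp φ ψ => STrue ρ φ → STrue ρ ψ
  | ρ, .all x φ => ∀ a, STrue (Function.update ρ x a) φ
  | ρ, .ex x φ => ∃ a, STrue (Function.update ρ x a) φ

/-- `x ≤ t` in the scheme language: `∃z A(z,x,t)`. -/
def leS (z x : ℕ) (t : PTerm) : Scheme := .ex z (.sA (.var z) (.var x) t)

/-- `Δ₀`-formulas of `Ar` (as schemes). -/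
inductive IsDelta0S : Scheme → Prop
  | bot : IsDelta0S .bot
  | sZ (t) : IsDelta0S (.sZ t)
  | sE (t u) : IsDelta0S (.sE t u)
  | sS (t u) : IsDelta0S (.sS t u)
  | sA (t u w) : IsDelta0S (.sA t u w)
  | sM (t u w) : IsDelta0S (.sM t u w)
  | and {φ ψ} : IsDelta0S φ → IsDelta0S ψ → IsDelta0S (φ.and ψ)
  | or {φ ψ} : IsDelta0S φ → IsDelta0S ψ → IsDelta0S (φ.or ψ)
  | imp {φ ψ} : IsDelta0S φ → IsDelta0S ψ → IsDelta0S (φ.imp ψ)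
  | ball {x z : ℕ} {t : PTerm} {φ} : x ∉ t.fv → z ∉ t.fv → z ≠ x → IsDelta0S φ →
      IsDelta0S (.all x ((leS z x t).imp φ))
  | bex {x z : ℕ} {t : PTerm} {φ} : x ∉ t.fv → z ∉ t.fv → z ≠ x → IsDelta0S φ →
      IsDelta0S (.ex x ((leS z x t).and φ))

/-- `Σ`-formulas of `Ar` (as schemes). -/
inductive IsSigmaS : Scheme → Prop
  | delta0 {φ} : IsDelta0S φ → IsSigmaS φ
  | and {φ ψ} : IsSigmaS φ → IsSigmaS ψ → IsSigmaS (φ.and ψ)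
  | or {φ ψ} : IsSigmaS φ → IsSigmaS ψ → IsSigmaS (φ.or ψ)
  | ball {x z : ℕ} {t : PTerm} {φ} : x ∉ t.fv → z ∉ t.fv → z ≠ x → IsSigmaS φ →
      IsSigmaS (.all x ((leS z x t).imp φ))
  | bex {x z : ℕ} {t : PTerm} {φ} : x ∉ t.fv → z ∉ t.fv → z ≠ x → IsSigmaS φ →
      IsSigmaS (.ex x ((leS z x t).and φ))
  | ex {x : ℕ} {φ} : IsSigmaS φ → IsSigmaS (.ex x φ)

/-- `Φ[c]`: replace each atom `Pⁿᵢ(t₁,…,tₙ)` of a predicate variable by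
`Pⁿ⁺¹ᵢ(c,t₁,…,tₙ)` (arithmetical atoms are unchanged). -/
def Scheme.bracketC (c : ℕ) : Scheme → Scheme
  | patom i args => patom i (.const c :: args)
  | and φ ψ => (φ.bracketC c).and (ψ.bracketC c)
  | or φ ψ => (φ.bracketC c).or (ψ.bracketC c)
  | imp φ ψ => (φ.bracketC c).imp (ψ.bracketC c)
  | all x φ => all x (φ.bracketC c)
  | ex x φ => ex x (φ.bracketC c)
  | φ => φ

/-- `Φ[z]` for a variable `z`: replace each atom `Pⁿᵢ(t₁,…,tₙ)` of a predicate variable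
by `Pⁿ⁺¹ᵢ(z,t₁,…,tₙ)`. -/
def Scheme.bracketV (z : ℕ) : Scheme → Scheme
  | patom i args => patom i (.var z :: args)
  | and φ ψ => (φ.bracketV z).and (ψ.bracketV z)
  | or φ ψ => (φ.bracketV z).or (ψ.bracketV z)
  | imp φ ψ => (φ.bracketV z).imp (ψ.bracketV z)
  | all x φ => all x (φ.bracketV z)
  | ex x φ => ex x (φ.bracketV z)
  | φ => φ

/-- The interpretation `f_c`: `f_c(Pⁿᵢ)(k₁,…,kₙ) = f(Pⁿ⁺¹ᵢ)(c,k₁,…,kₙ)`. -/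
def interpCons (c : ℕ) (f : Interp) : Interp := fun n i v => f (n + 1) i (Fin.cons c v)

/-- Does the predicate variable `Pⁿᵢ` occur in the scheme? -/
def Scheme.occursP (n i : ℕ) : Scheme → Prop
  | patom j args => j = i ∧ args.length = n
  | and φ ψ => φ.occursP n i ∨ ψ.occursP n i
  | or φ ψ => φ.occursP n i ∨ ψ.occursP n i
  | imp φ ψ => φ.occursP n i ∨ ψ.occursP n i
  | all _ φ => φ.occursP n i
  | ex _ φ => φ.occursP n i
  | _ => False

/-- The substitution of the terms `args` for the distinguished variables `x₁,…,xₙ`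
(named `0,…,n-1`). -/
def argSub (args : List PTerm) : ℕ → PTerm :=
  fun v => if h : v < args.length then args.get ⟨v, h⟩ else .var v

/-- Substitution of schemes for predicate variables: each atom `Pⁿᵢ(t₁,…,tₙ)` is
replaced by the result of simultaneously substituting `t₁,…,tₙ` for the distinguished
variables `0,…,n-1` of the scheme `σ n i`. -/
def Scheme.substP (σ : ℕ → ℕ → Scheme) : Scheme → Scheme
  | patom i args => (σ args.length i).msub (argSub args)
  | and φ ψ => (φ.substP σ).and (ψ.substP σ)
  | or φ ψ => (φ.substP σ).or (ψ.substP σ)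
  | imp φ ψ => (φ.substP σ).imp (ψ.substP σ)
  | all x φ => all x (φ.substP σ)
  | ex x φ => ex x (φ.substP σ)
  | φ => φ

/-- The list of schemes `σ` is acceptable for substitution in the given scheme:
(1) at every atom of a predicate variable the substitution of the argument terms
for the distinguished variables is capture-free, and (2) no atom of a predicate
variable lies in the scope of a quantifier binding a "superfluous" parameter of the
scheme substituted for that variable. -/
def Scheme.Acceptable (σ : ℕ → ℕ → Scheme) : Scheme → Prop
  | patom i args => (σ args.length i).FreeForM (argSub args)
  | and φ ψ => φ.Acceptable σ ∧ ψ.Acceptable σ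
  | or φ ψ => φ.Acceptable σ ∧ ψ.Acceptable σ
  | imp φ ψ => φ.Acceptable σ ∧ ψ.Acceptable σ
  | all x φ => (∀ n i, φ.occursP n i → x ∉ (σ n i).fv \ Finset.range n) ∧ φ.Acceptable σ
  | ex x φ => (∀ n i, φ.occursP n i → x ∉ (σ n i).fv \ Finset.range n) ∧ φ.Acceptable σ
  | _ => True

/-- The universal closure of a scheme. -/
def Scheme.univClosure (φ : Scheme) : Scheme :=
  (φ.fv.sort (· ≤ ·)).foldr Scheme.all φ




/-- Natural deduction for the intuitionistic predicate calculus `IQC` in the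
language `L*`. -/
inductive IQC : List PFml → PFml → Prop
  | hyp {Γ : List PFml} {φ : PFml} : φ ∈ Γ → IQC Γ φ
  | botE {Γ φ} : IQC Γ .bot → IQC Γ φ
  | andI {Γ : List PFml} {φ ψ : PFml} : IQC Γ φ → IQC Γ ψ → IQC Γ (φ.and ψ)
  | andE1 {Γ : List PFml} {φ ψ : PFml} : IQC Γ (φ.and ψ) → IQC Γ φ
  | andE2 {Γ : List PFml} {φ ψ : PFml} : IQC Γ (φ.and ψ) → IQC Γ ψ
  | orI1 {Γ : List PFml} {φ ψ : PFml} : IQC Γ φ → IQC Γ (φ.or ψ)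
  | orI2 {Γ : List PFml} {φ ψ : PFml} : IQC Γ ψ → IQC Γ (φ.or ψ)
  | orE {Γ φ ψ χ} : IQC Γ (φ.or ψ) → IQC (φ :: Γ) χ → IQC (ψ :: Γ) χ → IQC Γ χ
  | impI {Γ : List PFml} {φ ψ : PFml} : IQC (φ :: Γ) ψ → IQC Γ (φ.imp ψ)
  | impE {Γ : List PFml} {φ ψ : PFml} : IQC Γ (φ.imp ψ) → IQC Γ φ → IQC Γ ψ
  | allI {Γ x φ} : IQC Γ φ → (∀ ψ ∈ Γ, x ∉ ψ.fv) → IQC Γ (.all x φ)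
  | allE {Γ x φ} (t : PTerm) : IQC Γ (.all x φ) → φ.FreeForM (sub1 x t) →
      IQC Γ (φ.msub (sub1 x t))
  | exI {Γ x φ} (t : PTerm) : IQC Γ (φ.msub (sub1 x t)) → φ.FreeForM (sub1 x t) →
      IQC Γ (.ex x φ)
  | exE {Γ x φ χ} : IQC Γ (.ex x φ) → IQC (φ :: Γ) χ → x ∉ χ.fv →
      (∀ ψ ∈ Γ, x ∉ ψ.fv) → IQC Γ χ

/-- `Pⁿᵢ` occurs in the formula. -/
def PFml.occursP (n i : ℕ) : PFml → Prop
  | .atom j args => j = i ∧ args.length = n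
  | .and φ ψ => φ.occursP n i ∨ ψ.occursP n i
  | .or φ ψ => φ.occursP n i ∨ ψ.occursP n i
  | .imp φ ψ => φ.occursP n i ∨ ψ.occursP n i
  | .all _ φ => φ.occursP n i
  | .ex _ φ => φ.occursP n i
  | _ => False



/-- Substitution of formulas for predicate variables. -/
def PFml.substP (σ : ℕ → ℕ → PFml) : PFml → PFml
  | .atom i args => (σ args.length i).msub (argSub args)
  | .and φ ψ => (φ.substP σ).and (ψ.substP σ)
  | .or φ ψ => (φ.substP σ).or (ψ.substP σ)
  | .imp φ ψ => (φ.substP σ).imp (ψ.substP σ)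
  | .all x φ => .all x (φ.substP σ)
  | .ex x φ => .ex x (φ.substP σ)
  | .bot => .bot

def PFml.AcceptableP (σ : ℕ → ℕ → PFml) : PFml → Prop
  | .atom i args => (σ args.length i).FreeForM (argSub args)
  | .and φ ψ => φ.AcceptableP σ ∧ ψ.AcceptableP σ
  | .or φ ψ => φ.AcceptableP σ ∧ ψ.AcceptableP σ
  | .imp φ ψ => φ.AcceptableP σ ∧ ψ.AcceptableP σ
  | .all x φ => (∀ n i, φ.occursP n i → x ∉ (σ n i).fv \ Finset.range n) ∧ φ.AcceptableP σ
  | .ex x φ => (∀ n i, φ.occursP n i → x ∉ (σ n i).fv \ Finset.range n) ∧ φ.AcceptableP σ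
  | .bot => True

/-- `φ` is a substitutional instance of the predicate formula `base`. -/
def IsInstance (base φ : PFml) : Prop :=
  ∃ σ : ℕ → ℕ → PFml, base.AcceptableP σ ∧ φ = base.substP σ



inductive LATerm : Type
  | var (v : ℕ)
  | zero
  | succ (t : LATerm)
  | add (t u : LATerm)
  | mul (t u : LATerm)

def LATerm.eval (ρ : ℕ → ℕ) : LATerm → ℕ
  | var v => ρ v
  | zero => 0
  | succ t => t.eval ρ + 1
  | add t u => t.eval ρ + u.eval ρ
  | mul t u => t.eval ρ * u.eval ρ

def LATerm.fv : LATerm → Finset ℕ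
  | var v => {v}
  | zero => ∅
  | succ t => t.fv
  | add t u => t.fv ∪ u.fv
  | mul t u => t.fv ∪ u.fv

def LATerm.msub (s : ℕ → LATerm) : LATerm → LATerm
  | var v => s v
  | zero => zero
  | succ t => succ (t.msub s)
  | add t u => add (t.msub s) (u.msub s)
  | mul t u => mul (t.msub s) (u.msub s)

/-- The numeral for `n`. -/
def numeral : ℕ → LATerm
  | 0 => .zero
  | n + 1 => .succ (numeral n)

inductive LAFml : Type
  | eq (t u : LATerm)
  | and (φ ψ : LAFml)
  | or (φ ψ : LAFml)
  | imp (φ ψ : LAFml)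
  | not (φ : LAFml)
  | all (x : ℕ) (φ : LAFml)
  | ex (x : ℕ) (φ : LAFml)

def LAFml.fv : LAFml → Finset ℕ
  | eq t u => t.fv ∪ u.fv
  | and φ ψ => φ.fv ∪ ψ.fv
  | or φ ψ => φ.fv ∪ ψ.fv
  | imp φ ψ => φ.fv ∪ ψ.fv
  | not φ => φ.fv
  | all x φ => φ.fv.erase x
  | ex x φ => φ.fv.erase x

def LAFml.msub (s : ℕ → LATerm) : LAFml → LAFml
  | eq t u => eq (t.msub s) (u.msub s)
  | and φ ψ => (φ.msub s).and (ψ.msub s)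
  | or φ ψ => (φ.msub s).or (ψ.msub s)
  | imp φ ψ => (φ.msub s).imp (ψ.msub s)
  | not φ => (φ.msub s).not
  | all x φ => all x (φ.msub fun v => if v = x then .var x else s v)
  | ex x φ => ex x (φ.msub fun v => if v = x then .var x else s v)

def sub1LA (x : ℕ) (t : LATerm) : ℕ → LATerm := fun v => if v = x then t else .var v

def LAFml.FreeForM (s : ℕ → LATerm) : LAFml → Prop
  | and φ ψ => φ.FreeForM s ∧ ψ.FreeForM s
  | or φ ψ => φ.FreeForM s ∧ ψ.FreeForM s
  | imp φ ψ => φ.FreeForM s ∧ ψ.FreeForM s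
  | not φ => φ.FreeForM s
  | all x φ => (∀ v ∈ φ.fv, v ≠ x → x ∉ (s v).fv) ∧
      φ.FreeForM (fun v => if v = x then .var x else s v)
  | ex x φ => (∀ v ∈ φ.fv, v ≠ x → x ∉ (s v).fv) ∧
      φ.FreeForM (fun v => if v = x then .var x else s v)
  | _ => True

/-- Classical truth of an `LA`-formula in the standard model. -/
def LATrue : (ℕ → ℕ) → LAFml → Prop
  | ρ, .eq t u => t.eval ρ = u.eval ρ
  | ρ, .and φ ψ => LATrue ρ φ ∧ LATrue ρ ψ
  | ρ, .or φ ψ => LATrue ρ φ ∨ LATrue ρ ψ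
  | ρ, .imp φ ψ => LATrue ρ φ → LATrue ρ ψ
  | ρ, .not φ => ¬ LATrue ρ φ
  | ρ, .all x φ => ∀ a, LATrue (Function.update ρ x a) φ
  | ρ, .ex x φ => ∃ a, LATrue (Function.update ρ x a) φ


/-- Kleene's recursive realizability for `LA`-formulas. -/
def LAReal : (ℕ → ℕ) → ℕ → LAFml → Prop
  | ρ, e, .eq t u => e = 0 ∧ t.eval ρ = u.eval ρ
  | ρ, e, .and φ ψ => LAReal ρ (pexp 0 e) φ ∧ LAReal ρ (pexp 1 e) ψ
  | ρ, e, .or φ ψ => (pexp 0 e = 0 ∧ LAReal ρ (pexp 1 e) φ) ∨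
      (pexp 0 e = 1 ∧ LAReal ρ (pexp 1 e) ψ)
  | ρ, e, .imp φ ψ => ∀ a, LAReal ρ a φ → ∃ b ∈ K e a, LAReal ρ b ψ
  | ρ, _, .not φ => ∀ a, ¬ LAReal ρ a φ
  | ρ, e, .all x φ => ∀ a, ∃ b ∈ K e a, LAReal (Function.update ρ x a) b φ
  | ρ, e, .ex x φ => LAReal (Function.update ρ x (pexp 0 e)) (pexp 1 e) φ

/-- `t₁ ≤ t₂` in `LA`: `∃v (t₁ + v = t₂)`. -/
def leLA (x v : ℕ) (t : LATerm) : LAFml := .ex v (.eq (.add (.var x) (.var v)) t)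

inductive IsDelta0LA : LAFml → Prop
  | eq (t u) : IsDelta0LA (.eq t u)
  | and {φ ψ} : IsDelta0LA φ → IsDelta0LA ψ → IsDelta0LA (φ.and ψ)
  | or {φ ψ} : IsDelta0LA φ → IsDelta0LA ψ → IsDelta0LA (φ.or ψ)
  | imp {φ ψ} : IsDelta0LA φ → IsDelta0LA ψ → IsDelta0LA (φ.imp ψ)
  | not {φ} : IsDelta0LA φ → IsDelta0LA φ.not
  | ball {x v : ℕ} {t : LATerm} {φ} : x ∉ t.fv → v ∉ t.fv → v ≠ x → IsDelta0LA φ →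
      IsDelta0LA (.all x ((leLA x v t).imp φ))
  | bex {x v : ℕ} {t : LATerm} {φ} : x ∉ t.fv → v ∉ t.fv → v ≠ x → IsDelta0LA φ →
      IsDelta0LA (.ex x ((leLA x v t).and φ))

inductive IsSigmaLA : LAFml → Prop
  | delta0 {φ} : IsDelta0LA φ → IsSigmaLA φ
  | and {φ ψ} : IsSigmaLA φ → IsSigmaLA ψ → IsSigmaLA (φ.and ψ)
  | or {φ ψ} : IsSigmaLA φ → IsSigmaLA ψ → IsSigmaLA (φ.or ψ)
  | ball {x v : ℕ} {t : LATerm} {φ} : x ∉ t.fv → v ∉ t.fv → v ≠ x → IsSigmaLA φ →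
      IsSigmaLA (.all x ((leLA x v t).imp φ))
  | bex {x v : ℕ} {t : LATerm} {φ} : x ∉ t.fv → v ∉ t.fv → v ≠ x → IsSigmaLA φ →
      IsSigmaLA (.ex x ((leLA x v t).and φ))
  | ex {x : ℕ} {φ} : IsSigmaLA φ → IsSigmaLA (.ex x φ)

/-- Natural deduction over `LA` from a set `Ax` of non-logical axioms
(intuitionistic logic). -/
inductive LD (Ax : LAFml → Prop) : List LAFml → LAFml → Prop
  | ax {Γ φ} : Ax φ → LD Ax Γ φ
  | hyp {Γ φ} : φ ∈ Γ → LD Ax Γ φ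
  | andI {Γ : List LAFml} {φ ψ : LAFml} : LD Ax Γ φ → LD Ax Γ ψ → LD Ax Γ (φ.and ψ)
  | andE1 {Γ : List LAFml} {φ ψ : LAFml} : LD Ax Γ (φ.and ψ) → LD Ax Γ φ
  | andE2 {Γ : List LAFml} {φ ψ : LAFml} : LD Ax Γ (φ.and ψ) → LD Ax Γ ψ
  | orI1 {Γ : List LAFml} {φ ψ : LAFml} : LD Ax Γ φ → LD Ax Γ (φ.or ψ)
  | orI2 {Γ : List LAFml} {φ ψ : LAFml} : LD Ax Γ ψ → LD Ax Γ (φ.or ψ)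
  | orE {Γ φ ψ χ} : LD Ax Γ (φ.or ψ) → LD Ax (φ :: Γ) χ → LD Ax (ψ :: Γ) χ → LD Ax Γ χ
  | impI {Γ : List LAFml} {φ ψ : LAFml} : LD Ax (φ :: Γ) ψ → LD Ax Γ (φ.imp ψ)
  | impE {Γ : List LAFml} {φ ψ : LAFml} : LD Ax Γ (φ.imp ψ) → LD Ax Γ φ → LD Ax Γ ψ
  | notI {Γ : List LAFml} {φ ψ : LAFml} : LD Ax (φ :: Γ) ψ → LD Ax (φ :: Γ) ψ.not → LD Ax Γ φ.not
  | notE {Γ : List LAFml} {φ ψ : LAFml} : LD Ax Γ φ → LD Ax Γ φ.not → LD Ax Γ ψ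
  | allI {Γ x φ} : LD Ax Γ φ → (∀ ψ ∈ Γ, x ∉ ψ.fv) → LD Ax Γ (.all x φ)
  | allE {Γ x φ} (t : LATerm) : LD Ax Γ (.all x φ) → φ.FreeForM (sub1LA x t) →
      LD Ax Γ (φ.msub (sub1LA x t))
  | exI {Γ x φ} (t : LATerm) : LD Ax Γ (φ.msub (sub1LA x t)) → φ.FreeForM (sub1LA x t) →
      LD Ax Γ (.ex x φ)
  | exE {Γ x φ χ} : LD Ax Γ (.ex x φ) → LD Ax (φ :: Γ) χ → x ∉ χ.fv →
      (∀ ψ ∈ Γ, x ∉ ψ.fv) → LD Ax Γ χ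

open LATerm (var) in
/-- The axioms of equality and the Peano axioms for successor, sum and product
(without induction). -/
def baseAxioms : List LAFml := [
  .all 0 (.eq (var 0) (var 0)),
  .all 0 (.all 1 (.all 2 ((LAFml.eq (var 0) (var 1)).imp
    ((LAFml.eq (var 0) (var 2)).imp (.eq (var 1) (var 2)))))),
  .all 0 (.all 1 ((LAFml.eq (var 0) (var 1)).imp (.eq (.succ (var 0)) (.succ (var 1))))),
  .all 0 (.all 1 ((LAFml.eq (.succ (var 0)) (.succ (var 1))).imp (.eq (var 0) (var 1)))),
  .all 0 (LAFml.not (.eq (.succ (var 0)) .zero)),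
  .all 0 (.all 1 (.all 2 ((LAFml.eq (var 0) (var 1)).imp
    (.eq (.add (var 0) (var 2)) (.add (var 1) (var 2)))))),
  .all 0 (.all 1 (.all 2 ((LAFml.eq (var 0) (var 1)).imp
    (.eq (.add (var 2) (var 0)) (.add (var 2) (var 1)))))),
  .all 0 (.all 1 (.all 2 ((LAFml.eq (var 0) (var 1)).imp
    (.eq (.mul (var 0) (var 2)) (.mul (var 1) (var 2)))))),
  .all 0 (.all 1 (.all 2 ((LAFml.eq (var 0) (var 1)).imp
    (.eq (.mul (var 2) (var 0)) (.mul (var 2) (var 1)))))),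
  .all 0 (.eq (.add (var 0) .zero) (var 0)),
  .all 0 (.all 1 (.eq (.add (var 0) (.succ (var 1))) (.succ (.add (var 0) (var 1))))),
  .all 0 (.eq (.mul (var 0) .zero) .zero),
  .all 0 (.all 1 (.eq (.mul (var 0) (.succ (var 1)))
    (.add (.mul (var 0) (var 1)) (var 0))))]

/-- The axioms of intuitionistic Robinson arithmetic `IRA`: the Peano axioms with the
induction scheme replaced by `∀x (x = 0 ∨ ∃y (x = sy))`. -/
def IRAax (φ : LAFml) : Prop :=
  φ ∈ baseAxioms ∨
    φ = .all 0 ((LAFml.eq (.var 0) .zero).or (.ex 1 (.eq (.var 0) (.succ (.var 1)))))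

/-- An instance of the induction scheme. -/
def indInst (x : ℕ) (φ : LAFml) : LAFml :=
  ((φ.msub (sub1LA x .zero)).and
    (.all x (φ.imp (φ.msub (sub1LA x (.succ (.var x))))))).imp (.all x φ)

/-- The axioms of Heyting arithmetic `HA`. -/
def HAax (ψ : LAFml) : Prop := ψ ∈ baseAxioms ∨ ∃ x φ, ψ = indInst x φ




/-- Translation of schemes into pure predicate formulas: the arithmetical predicate
symbols `Z,E,S,A,M` become the predicate variables `P¹₀,P²₀,P²₁,P³₀,P³₁`, and the other
predicate variables are renamed injectively so as to avoid these five. -/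
def Scheme.toPFml : Scheme → PFml
  | .bot => .bot
  | .sZ t => vZ t
  | .sE t u => vE t u
  | .sS t u => vS t u
  | .sA t u w => vA t u w
  | .sM t u w => vM t u w
  | .patom i args => .atom (i + 2) args
  | .and φ ψ => φ.toPFml.and ψ.toPFml
  | .or φ ψ => φ.toPFml.or ψ.toPFml
  | .imp φ ψ => φ.toPFml.imp ψ.toPFml
  | .all x φ => .all x φ.toPFml
  | .ex x φ => .ex x φ.toPFml

/-- `Eq(E,P₁,…,Pₘ)`: the conjunction of the axioms of equality for the predicate
variables of the scheme `Φ` (as renamed by `Scheme.toPFml`). -/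
noncomputable def EqFor (Φ : Scheme) : PFml :=
  bigAnd (Φ.pvars.toList.map fun p => eqAx p.1 (p.2 + 2))

/-- `Φ*`: the pure predicate formula
`Q(Z,E,S,A,M) & Eq(E,P₁,…,Pₘ) → Φ(Z,E,S,A,M,P₁,…,Pₘ)` associated with a scheme `Φ`. -/
noncomputable def SchemeStar (G B : PFml) (Φ : Scheme) : PFml :=
  ((Qfml G B).and (EqFor Φ)).imp Φ.toPFml

/-- The Markov principle `M` as a pure predicate formula, with `P` the unary
predicate variable `P¹₁`. -/
def Mfml : PFml :=
  ((PFml.all 0 ((PFml.atom 1 [.var 0]).or (PFml.atom 1 [.var 0]).not)).and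
    (PFml.ex 0 (PFml.atom 1 [.var 0])).not.not).imp (PFml.ex 0 (PFml.atom 1 [.var 0]))

/-- `G(z,x,y)` where `z,x,y` are the variables `2,0,1` and the distinguished variables
`0,1,2` of `G` play the role of `x,y,z` in `G(x,y,z)` (expressing `{x}(y)=z`). -/
def Gzxy (G : PFml) : PFml :=
  G.msub fun v => if v = 0 then .var 2 else if v = 1 then .var 0 else
    if v = 2 then .var 1 else .var v

/-- The scheme `nCT` as a pure predicate formula: `P` is the predicate variable `P¹₁`
and `Q'` is `P²₂`. -/
def nCTfml (G : PFml) : PFml :=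
  (PFml.all 0 ((PFml.atom 1 [.var 0]).not.imp
      (PFml.ex 1 (PFml.atom 2 [.var 0, .var 1])))).imp
    (PFml.ex 2 (PFml.all 0 ((PFml.atom 1 [.var 0]).not.imp
      (PFml.ex 1 ((Gzxy G).and (PFml.atom 2 [.var 0, .var 1]))))))

/-- The pure predicate formula `nCT*`, i.e. `Q & Eq(E,P,Q') → nCT`. -/
def nCTstar (G B : PFml) : PFml :=
  ((Qfml G B).and ((eqAx 1 1).and (eqAx 2 2))).imp (nCTfml G)

/-- The calculus `MQC`: intuitionistic predicate calculus together with all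
substitutional instances of the Markov principle `M` and of the formula `nCT*`
as axioms. -/
inductive MQC (G B : PFml) : List PFml → PFml → Prop
  | axM {Γ : List PFml} {φ : PFml} : IsInstance Mfml φ → MQC G B Γ φ
  | axCT {Γ : List PFml} {φ : PFml} : IsInstance (nCTstar G B) φ → MQC G B Γ φ
  | hyp {Γ : List PFml} {φ : PFml} : φ ∈ Γ → MQC G B Γ φ
  | botE {Γ φ} : MQC G B Γ .bot → MQC G B Γ φ
  | andI {Γ : List PFml} {φ ψ : PFml} : MQC G B Γ φ → MQC G B Γ ψ → MQC G B Γ (φ.and ψ)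
  | andE1 {Γ : List PFml} {φ ψ : PFml} : MQC G B Γ (φ.and ψ) → MQC G B Γ φ
  | andE2 {Γ : List PFml} {φ ψ : PFml} : MQC G B Γ (φ.and ψ) → MQC G B Γ ψ
  | orI1 {Γ : List PFml} {φ ψ : PFml} : MQC G B Γ φ → MQC G B Γ (φ.or ψ)
  | orI2 {Γ : List PFml} {φ ψ : PFml} : MQC G B Γ ψ → MQC G B Γ (φ.or ψ)
  | orE {Γ : List PFml} {φ ψ χ : PFml} : MQC G B Γ (φ.or ψ) → MQC G B (φ :: Γ) χ →
      MQC G B (ψ :: Γ) χ → MQC G B Γ χ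
  | impI {Γ : List PFml} {φ ψ : PFml} : MQC G B (φ :: Γ) ψ → MQC G B Γ (φ.imp ψ)
  | impE {Γ : List PFml} {φ ψ : PFml} : MQC G B Γ (φ.imp ψ) → MQC G B Γ φ → MQC G B Γ ψ
  | allI {Γ x φ} : MQC G B Γ φ → (∀ ψ ∈ Γ, x ∉ ψ.fv) → MQC G B Γ (.all x φ)
  | allE {Γ x φ} (t : PTerm) : MQC G B Γ (.all x φ) → φ.FreeForM (sub1 x t) →
      MQC G B Γ (φ.msub (sub1 x t))
  | exI {Γ x φ} (t : PTerm) : MQC G B Γ (φ.msub (sub1 x t)) → φ.FreeForM (sub1 x t) →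
      MQC G B Γ (.ex x φ)
  | exE {Γ x φ χ} : MQC G B Γ (.ex x φ) → MQC G B (φ :: Γ) χ → x ∉ χ.fv →
      (∀ ψ ∈ Γ, x ∉ ψ.fv) → MQC G B Γ χ

/-- The classical predicate calculus `CQC`: intuitionistic predicate calculus together
with the law of the excluded middle. -/
inductive CQC : List PFml → PFml → Prop
  | em {Γ : List PFml} (φ : PFml) : CQC Γ (φ.or φ.not)
  | hyp {Γ : List PFml} {φ : PFml} : φ ∈ Γ → CQC Γ φ
  | botE {Γ φ} : CQC Γ .bot → CQC Γ φ
  | andI {Γ : List PFml} {φ ψ : PFml} : CQC Γ φ → CQC Γ ψ → CQC Γ (φ.and ψ)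
  | andE1 {Γ : List PFml} {φ ψ : PFml} : CQC Γ (φ.and ψ) → CQC Γ φ
  | andE2 {Γ : List PFml} {φ ψ : PFml} : CQC Γ (φ.and ψ) → CQC Γ ψ
  | orI1 {Γ : List PFml} {φ ψ : PFml} : CQC Γ φ → CQC Γ (φ.or ψ)
  | orI2 {Γ : List PFml} {φ ψ : PFml} : CQC Γ ψ → CQC Γ (φ.or ψ)
  | orE {Γ : List PFml} {φ ψ χ : PFml} : CQC Γ (φ.or ψ) → CQC (φ :: Γ) χ →
      CQC (ψ :: Γ) χ → CQC Γ χ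
  | impI {Γ : List PFml} {φ ψ : PFml} : CQC (φ :: Γ) ψ → CQC Γ (φ.imp ψ)
  | impE {Γ : List PFml} {φ ψ : PFml} : CQC Γ (φ.imp ψ) → CQC Γ φ → CQC Γ ψ
  | allI {Γ x φ} : CQC Γ φ → (∀ ψ ∈ Γ, x ∉ ψ.fv) → CQC Γ (.all x φ)
  | allE {Γ x φ} (t : PTerm) : CQC Γ (.all x φ) → φ.FreeForM (sub1 x t) →
      CQC Γ (φ.msub (sub1 x t))
  | exI {Γ x φ} (t : PTerm) : CQC Γ (φ.msub (sub1 x t)) → φ.FreeForM (sub1 x t) →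
      CQC Γ (.ex x φ)
  | exE {Γ x φ χ} : CQC Γ (.ex x φ) → CQC (φ :: Γ) χ → x ∉ χ.fv →
      (∀ ψ ∈ Γ, x ∉ ψ.fv) → CQC Γ χ

/-- Auxiliary translation for the predicate form: the formula expressing that the
`LA`-term `t` has value `v`; `k` is a supply of fresh variables, and the next unused
fresh variable is returned. -/
def LATerm.pf : LATerm → ℕ → ℕ → PFml × ℕ
  | .var u, v, k => (vE (.var u) (.var v), k)
  | .zero, v, k => (vZ (.var v), k)
  | .succ t, v, k =>
      let r := t.pf k (k + 1)
      (.ex k (r.1.and (vS (.var k) (.var v))), r.2)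
  | .add t u, v, k =>
      let r1 := t.pf k (k + 2)
      let r2 := u.pf (k + 1) r1.2
      (.ex k (.ex (k + 1) (r1.1.and (r2.1.and (vA (.var k) (.var (k + 1)) (.var v))))), r2.2)
  | .mul t u, v, k =>
      let r1 := t.pf k (k + 2)
      let r2 := u.pf (k + 1) r1.2
      (.ex k (.ex (k + 1) (r1.1.and (r2.1.and (vM (.var k) (.var (k + 1)) (.var v))))), r2.2)

/-- Auxiliary translation for the predicate form of an `LA`-formula;
`k` is a supply of fresh variables. -/
def LAFml.pf : LAFml → ℕ → PFml
  | .eq t u, k =>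
      let r1 := t.pf k (k + 2)
      let r2 := u.pf (k + 1) r1.2
      .ex k (.ex (k + 1) (r1.1.and (r2.1.and (vE (.var k) (.var (k + 1))))))
  | .and φ ψ, k => (φ.pf k).and (ψ.pf k)
  | .or φ ψ, k => (φ.pf k).or (ψ.pf k)
  | .imp φ ψ, k => (φ.pf k).imp (ψ.pf k)
  | .not φ, k => (φ.pf k).not
  | .all x φ, k => .all x (φ.pf k)
  | .ex x φ, k => .ex x (φ.pf k)

def LATerm.vmax : LATerm → ℕ
  | .var v => v + 1
  | .zero => 0
  | .succ t => t.vmax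
  | .add t u => max t.vmax u.vmax
  | .mul t u => max t.vmax u.vmax

def LAFml.vmax : LAFml → ℕ
  | .eq t u => max t.vmax u.vmax
  | .and φ ψ => max φ.vmax ψ.vmax
  | .or φ ψ => max φ.vmax ψ.vmax
  | .imp φ ψ => max φ.vmax ψ.vmax
  | .not φ => φ.vmax
  | .all x φ => max (x + 1) φ.vmax
  | .ex x φ => max (x + 1) φ.vmax

/-- The predicate form of an `LA`-formula: the result of eliminating the function
symbols `0, s, +, ·` and replacing `=` by the predicate symbol `E`. -/
def predForm (φ : LAFml) : PFml := φ.pf φ.vmax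

/-- Translation of `L*`-terms into `LA`-terms (constants become numerals). -/
def PTerm.toLA : PTerm → LATerm
  | .var v => .var v
  | .const c => numeral c

/-- Substitution of arithmetical formulas for the predicate variables of a predicate
formula: the atom `Pⁿᵢ(t₁,…,tₙ)` is replaced by the result of substituting `t₁,…,tₙ`
for the distinguished variables `0,…,n-1` of the `LA`-formula `σ n i`. -/
def PFml.toLA (σ : ℕ → ℕ → LAFml) : PFml → LAFml
  | .bot => .eq .zero (.succ .zero)
  | .atom i args => (σ args.length i).msub
      (fun v => if h : v < args.length then (args.get ⟨v, h⟩).toLA else .var v)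
  | .and φ ψ => (φ.toLA σ).and (ψ.toLA σ)
  | .or φ ψ => (φ.toLA σ).or (ψ.toLA σ)
  | .imp φ ψ => (φ.toLA σ).imp (ψ.toLA σ)
  | .all x φ => .all x (φ.toLA σ)
  | .ex x φ => .ex x (φ.toLA σ)

/-- Acceptability of the arithmetical substitution `σ` for a predicate formula. -/
def PFml.AcceptLA (σ : ℕ → ℕ → LAFml) : PFml → Prop
  | .atom i args => (σ args.length i).FreeForM
      (fun v => if h : v < args.length then (args.get ⟨v, h⟩).toLA else .var v)
  | .and φ ψ => φ.AcceptLA σ ∧ ψ.AcceptLA σ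
  | .or φ ψ => φ.AcceptLA σ ∧ ψ.AcceptLA σ
  | .imp φ ψ => φ.AcceptLA σ ∧ ψ.AcceptLA σ
  | .all x φ => (∀ n i, φ.occursP n i → x ∉ (σ n i).fv \ Finset.range n) ∧ φ.AcceptLA σ
  | .ex x φ => (∀ n i, φ.occursP n i → x ∉ (σ n i).fv \ Finset.range n) ∧ φ.AcceptLA σ
  | .bot => True

/-- The standard arithmetical reading of the predicate symbols `Z,E,S,A,M`. -/
def arithSig : ℕ → ℕ → LAFml
  | 1, 0 => .eq (.var 0) .zero
  | 2, 0 => .eq (.var 0) (.var 1)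
  | 2, 1 => .eq (.succ (.var 0)) (.var 1)
  | 3, 0 => .eq (.add (.var 0) (.var 1)) (.var 2)
  | 3, 1 => .eq (.mul (.var 0) (.var 1)) (.var 2)
  | _, _ => .eq .zero (.succ .zero)

/-- An instance of the Markov scheme `M` in the language `LA`. -/
def MinstLA (x : ℕ) (φ : LAFml) : LAFml :=
  ((LAFml.all x (φ.or φ.not)).and (LAFml.ex x φ).not.not).imp (.ex x φ)

/-- An instance of the scheme `nCT` in the language `LA` (with `x,y,e` the variables
`0,1,2`): `∀x(¬Ψ(x) → ∃y Φ(x,y)) → ∃e ∀x(¬Ψ(x) → ∃y(G(e,x,y) & Φ(x,y)))`. -/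
def nCTinstLA (GLA Ψ Φ : LAFml) : LAFml :=
  (LAFml.all 0 (Ψ.not.imp (.ex 1 Φ))).imp
    (.ex 2 (.all 0 (Ψ.not.imp (.ex 1 ((GLA.msub fun v =>
      if v = 0 then .var 2 else if v = 1 then .var 0 else
        if v = 2 then .var 1 else .var v).and Φ)))))

/-- The axioms of Markov arithmetic `MA = HA + M + nCT`. -/
def MAax (GLA : LAFml) (ψ : LAFml) : Prop :=
  HAax ψ ∨ (∃ x φ, ψ = MinstLA x φ) ∨
    (∃ Ψ Φ : LAFml, 1 ∉ Ψ.fv ∧ 2 ∉ Ψ.fv ∧ 2 ∉ Φ.fv ∧ ψ = nCTinstLA GLA Ψ Φ)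

/-- The axioms of the theory `CA`: the Peano axioms (those of `HA`) together with all
arithmetical substitutional instances of the predicate formulas `M` and `nCT*`. -/
def CAax (G B : PFml) (ψ : LAFml) : Prop :=
  HAax ψ ∨ (∃ σ, Mfml.AcceptLA σ ∧ ψ = Mfml.toLA σ) ∨
    (∃ σ, (nCTstar G B).AcceptLA σ ∧ ψ = (nCTstar G B).toLA σ)


/-- The interpretation `f` is a model of the closed formula `Φ` if `Φ` is
`f`-realizable. -/
def IsModel (f : Interp) (φ : PFml) : Prop := ∃ e, Realizes f rho0 e φ

/-- A natural number `a` is `f`-standard if the formula `[n](a)` is `f`-realizable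
for some `n`. -/
def fStandard (f : Interp) (a : ℕ) : Prop :=
  ∃ n e, Realizes f rho0 e (numFt n (.const a))

/-- The scheme `nCT` (with `P` the unary predicate variable `P¹₀` and `Q'` the binary
predicate variable `P²₀`, and `x,y,z` the variables `0,1,2`):
`∀x(¬P(x) → ∃y Q'(x,y)) → ∃z ∀x (¬P(x) → ∃y (G(z,x,y) & Q'(x,y)))`. -/
def nCTscheme (GS : Scheme) : Scheme :=
  (Scheme.all 0 ((Scheme.patom 0 [.var 0]).not.imp
      (.ex 1 (.patom 0 [.var 0, .var 1])))).imp
    (.ex 2 (.all 0 ((Scheme.patom 0 [.var 0]).not.imp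
      (.ex 1 ((GS.msub fun v => if v = 0 then .var 2 else if v = 1 then .var 0 else
          if v = 2 then .var 1 else .var v).and (.patom 0 [.var 0, .var 1]))))))

/-- The arithmetical formula `Φ(x) = ∃y (Z(y) & G(x,x,y))` (with `x,y` the
variables `0,1`), expressing `{x}(x) = 0`. -/
def PhiX (G : PFml) : PFml :=
  .ex 1 ((vZ (.var 1)).and (G.msub fun v =>
    if v = 0 then .var 0 else if v = 1 then .var 0 else
      if v = 2 then .var 1 else .var v))

/-- The predicate formula `Ψ* = (Q → Ψ)` where `Ψ = ¬∀x(¬Φ(x) ∨ Φ(x))` and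
`Φ(x) = ∃y(Z(y) & G(x,x,y))`. -/
def PsiStar (G B : PFml) : PFml :=
  (Qfml G B).imp (PFml.not (.all 0 (((PhiX G).not).or (PhiX G))))

end Cpc

namespace Cpc

theorem PTerm.msub_congr {s s' : ℕ → PTerm} {t : PTerm} (hs : ∀ v ∈ t.fv, s v = s' v) :
    t.msub s = t.msub s' := by
  cases t with
  | var v => exact hs v (by simp [PTerm.fv])
  | const c => rfl

theorem mem_foldr_fv {args : List PTerm} {v : ℕ} :
    v ∈ args.foldr (fun t s => t.fv ∪ s) ∅ ↔ ∃ t ∈ args, v ∈ t.fv := by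
  induction args with
  | nil => simp
  | cons a l ih => simp [ih]

theorem PFml.msub_congr (φ : PFml) : ∀ {s s' : ℕ → PTerm}, (∀ v ∈ φ.fv, s v = s' v) →
    φ.msub s = φ.msub s' := by
  induction φ with
  | bot => intros; rfl
  | atom i args =>
    intro s s' hs
    simp only [PFml.msub, PFml.atom.injEq, true_and]
    apply List.map_congr_left
    intro t ht
    exact PTerm.msub_congr fun v hv => hs v (mem_foldr_fv.2 ⟨t, ht, hv⟩)
  | and φ ψ ih1 ih2 =>
    intro s s' hs
    simp only [PFml.msub, PFml.fv, Finset.mem_union] at *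
    rw [ih1 fun v hv => hs v (Or.inl hv), ih2 fun v hv => hs v (Or.inr hv)]
  | or φ ψ ih1 ih2 =>
    intro s s' hs
    simp only [PFml.msub, PFml.fv, Finset.mem_union] at *
    rw [ih1 fun v hv => hs v (Or.inl hv), ih2 fun v hv => hs v (Or.inr hv)]
  | imp φ ψ ih1 ih2 =>
    intro s s' hs
    simp only [PFml.msub, PFml.fv, Finset.mem_union] at *
    rw [ih1 fun v hv => hs v (Or.inl hv), ih2 fun v hv => hs v (Or.inr hv)]
  | all x φ ih =>
    intro s s' hs
    simp only [PFml.msub, PFml.fv, Finset.mem_erase] at *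
    rw [ih]
    intro v hv
    by_cases h : v = x
    · simp [h]
    · simp [h, hs v ⟨h, hv⟩]
  | ex x φ ih =>
    intro s s' hs
    simp only [PFml.msub, PFml.fv, Finset.mem_erase] at *
    rw [ih]
    intro v hv
    by_cases h : v = x
    · simp [h]
    · simp [h, hs v ⟨h, hv⟩]

theorem PTerm.msub_var (t : PTerm) : t.msub PTerm.var = t := by cases t <;> rfl

theorem PFml.msub_var (φ : PFml) : φ.msub PTerm.var = φ := by
  induction φ with
  | bot => rfl
  | atom i args =>
    simp only [PFml.msub, PFml.atom.injEq, true_and]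
    conv_rhs => rw [← List.map_id args]
    exact List.map_congr_left fun t _ => t.msub_var
  | and φ ψ ih1 ih2 => simp [PFml.msub, ih1, ih2]
  | or φ ψ ih1 ih2 => simp [PFml.msub, ih1, ih2]
  | imp φ ψ ih1 ih2 => simp [PFml.msub, ih1, ih2]
  | all x φ ih =>
    simp only [PFml.msub]
    conv_rhs => rw [← ih]
    congr 2; funext v; split_ifs with h <;> simp [h]
  | ex x φ ih =>
    simp only [PFml.msub]
    conv_rhs => rw [← ih]
    congr 2; funext v; split_ifs with h <;> simp [h]

theorem PFml.msub_id (φ : PFml) {s : ℕ → PTerm} (hs : ∀ v ∈ φ.fv, s v = .var v) :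
    φ.msub s = φ := by
  rw [φ.msub_congr hs]; exact φ.msub_var

theorem PFml.bv_msub (φ : PFml) : ∀ s, (φ.msub s).bv = φ.bv := by
  induction φ <;> intro s <;> simp_all [PFml.msub, PFml.bv]

theorem PFml.fv_msub (φ : PFml) : ∀ {s : ℕ → PTerm} {v : ℕ}, v ∈ (φ.msub s).fv →
    ∃ u ∈ φ.fv, v ∈ (s u).fv := by
  induction φ with
  | bot => intro s v hv; simp [PFml.msub, PFml.fv] at hv
  | atom i args =>
    intro s v hv
    simp only [PFml.msub, PFml.fv] at hv ⊢
    rw [mem_foldr_fv] at hv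
    obtain ⟨t, ht, hv⟩ := hv
    obtain ⟨t', ht', rfl⟩ := List.mem_map.1 ht
    cases t' with
    | var u => exact ⟨u, mem_foldr_fv.2 ⟨_, ht', by simp [PTerm.fv]⟩, hv⟩
    | const c => simp [PTerm.msub, PTerm.fv] at hv
  | and φ ψ ih1 ih2 =>
    intro s v hv
    simp only [PFml.msub, PFml.fv, Finset.mem_union] at hv ⊢
    rcases hv with hv | hv
    · obtain ⟨u, h1, h2⟩ := ih1 hv; exact ⟨u, Or.inl h1, h2⟩
    · obtain ⟨u, h1, h2⟩ := ih2 hv; exact ⟨u, Or.inr h1, h2⟩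
  | or φ ψ ih1 ih2 =>
    intro s v hv
    simp only [PFml.msub, PFml.fv, Finset.mem_union] at hv ⊢
    rcases hv with hv | hv
    · obtain ⟨u, h1, h2⟩ := ih1 hv; exact ⟨u, Or.inl h1, h2⟩
    · obtain ⟨u, h1, h2⟩ := ih2 hv; exact ⟨u, Or.inr h1, h2⟩
  | imp φ ψ ih1 ih2 =>
    intro s v hv
    simp only [PFml.msub, PFml.fv, Finset.mem_union] at hv ⊢
    rcases hv with hv | hv
    · obtain ⟨u, h1, h2⟩ := ih1 hv; exact ⟨u, Or.inl h1, h2⟩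
    · obtain ⟨u, h1, h2⟩ := ih2 hv; exact ⟨u, Or.inr h1, h2⟩
  | all x φ ih =>
    intro s v hv
    simp only [PFml.msub, PFml.fv, Finset.mem_erase] at hv ⊢
    obtain ⟨u, h1, h2⟩ := ih hv.2
    by_cases h : u = x
    · simp [h, PTerm.fv] at h2; exact absurd h2 hv.1
    · simp [h] at h2; exact ⟨u, ⟨h, h1⟩, h2⟩
  | ex x φ ih =>
    intro s v hv
    simp only [PFml.msub, PFml.fv, Finset.mem_erase] at hv ⊢
    obtain ⟨u, h1, h2⟩ := ih hv.2
    by_cases h : u = x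
    · simp [h, PTerm.fv] at h2; exact absurd h2 hv.1
    · simp [h] at h2; exact ⟨u, ⟨h, h1⟩, h2⟩

theorem PFml.freeFor_of (φ : PFml) : ∀ {s : ℕ → PTerm},
    (∀ v ∈ φ.fv, s v = .var v ∨ ∀ u ∈ (s v).fv, u ∉ φ.bv) → φ.FreeForM s := by
  induction φ with
  | bot => intros; trivial
  | atom i args => intros; trivial
  | and φ ψ ih1 ih2 =>
    intro s hs
    simp only [PFml.fv, PFml.bv, Finset.mem_union, not_or] at hs
    exact ⟨ih1 fun v hv => (hs v (Or.inl hv)).imp id fun h u hu => (h u hu).1,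
      ih2 fun v hv => (hs v (Or.inr hv)).imp id fun h u hu => (h u hu).2⟩
  | or φ ψ ih1 ih2 =>
    intro s hs
    simp only [PFml.fv, PFml.bv, Finset.mem_union, not_or] at hs
    exact ⟨ih1 fun v hv => (hs v (Or.inl hv)).imp id fun h u hu => (h u hu).1,
      ih2 fun v hv => (hs v (Or.inr hv)).imp id fun h u hu => (h u hu).2⟩
  | imp φ ψ ih1 ih2 =>
    intro s hs
    simp only [PFml.fv, PFml.bv, Finset.mem_union, not_or] at hs
    exact ⟨ih1 fun v hv => (hs v (Or.inl hv)).imp id fun h u hu => (h u hu).1,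
      ih2 fun v hv => (hs v (Or.inr hv)).imp id fun h u hu => (h u hu).2⟩
  | all x φ ih =>
    intro s hs
    simp only [PFml.fv, PFml.bv, Finset.mem_erase, Finset.mem_insert, not_or] at hs
    refine ⟨fun v hv hvx hx => ?_, ih fun v hv => ?_⟩
    · rcases hs v ⟨hvx, hv⟩ with h | h
      · rw [h] at hx; simp [PTerm.fv] at hx; exact hvx hx.symm
      · exact (h x hx).1 rfl
    · by_cases h : v = x
      · simp [h]
      · simp only [h, if_false]
        exact (hs v ⟨h, hv⟩).imp id fun h u hu => (h u hu).2
  | ex x φ ih =>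
    intro s hs
    simp only [PFml.fv, PFml.bv, Finset.mem_erase, Finset.mem_insert, not_or] at hs
    refine ⟨fun v hv hvx hx => ?_, ih fun v hv => ?_⟩
    · rcases hs v ⟨hvx, hv⟩ with h | h
      · rw [h] at hx; simp [PTerm.fv] at hx; exact hvx hx.symm
      · exact (h x hx).1 rfl
    · by_cases h : v = x
      · simp [h]
      · simp only [h, if_false]
        exact (hs v ⟨h, hv⟩).imp id fun h u hu => (h u hu).2

theorem PTerm.msub_msub (t : PTerm) (s s' : ℕ → PTerm) :
    (t.msub s).msub s' = t.msub fun v => (s v).msub s' := by cases t <;> rfl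

theorem PFml.msub_msub (φ : PFml) : ∀ {s : ℕ → PTerm} (s' : ℕ → PTerm), φ.FreeForM s →
    (φ.msub s).msub s' = φ.msub fun v => (s v).msub s' := by
  induction φ with
  | bot => intros; rfl
  | atom i args =>
    intro s s' _
    simp only [PFml.msub, List.map_map, PFml.atom.injEq, true_and]
    exact List.map_congr_left fun t _ => t.msub_msub s s'
  | and φ ψ ih1 ih2 => intro s s' hs; simp [PFml.msub, ih1 s' hs.1, ih2 s' hs.2]
  | or φ ψ ih1 ih2 => intro s s' hs; simp [PFml.msub, ih1 s' hs.1, ih2 s' hs.2]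
  | imp φ ψ ih1 ih2 => intro s s' hs; simp [PFml.msub, ih1 s' hs.1, ih2 s' hs.2]
  | all x φ ih =>
    intro s s' hs
    simp only [PFml.msub, PFml.all.injEq, true_and]
    rw [ih _ hs.2]
    apply PFml.msub_congr
    intro v hv
    by_cases h : v = x
    · simp [h, PTerm.msub]
    · simp only [h, if_false]
      apply PTerm.msub_congr
      intro u hu
      have : u ≠ x := fun e => hs.1 v hv h (e ▸ hu)
      simp [this]
  | ex x φ ih =>
    intro s s' hs
    simp only [PFml.msub, PFml.ex.injEq, true_and]
    rw [ih _ hs.2]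
    apply PFml.msub_congr
    intro v hv
    by_cases h : v = x
    · simp [h, PTerm.msub]
    · simp only [h, if_false]
      apply PTerm.msub_congr
      intro u hu
      have : u ≠ x := fun e => hs.1 v hv h (e ▸ hu)
      simp [this]

/-! Soundness of CQC -/

theorem PTerm.eval_congr {ρ ρ' : ℕ → ℕ} {t : PTerm} (hs : ∀ v ∈ t.fv, ρ v = ρ' v) :
    t.eval ρ = t.eval ρ' := by
  cases t with
  | var v => exact hs v (by simp [PTerm.fv])
  | const c => rfl

theorem PTerm.eval_msub (t : PTerm) (s : ℕ → PTerm) (ρ : ℕ → ℕ) :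
    (t.msub s).eval ρ = t.eval fun v => (s v).eval ρ := by cases t <;> rfl

theorem arithStd_congr {i : ℕ} {l l' : List ℕ} (hl : l = l') :
    arithStd l.length i l.get ↔ arithStd l'.length i l'.get := by subst hl; rfl

theorem arithStd_list {i : ℕ} (args : List PTerm) (ρ : ℕ → ℕ) :
    arithStd args.length i (fun j => (args.get j).eval ρ) ↔
    arithStd (args.map (PTerm.eval ρ)).length i (args.map (PTerm.eval ρ)).get := by
  have key : ∀ (n : ℕ) (e : args.length = n) (w : Fin n → ℕ),
      (∀ j : Fin args.length, w (Fin.cast e j) = (args.get j).eval ρ) →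
      (arithStd args.length i (fun j => (args.get j).eval ρ) ↔ arithStd n i w) := by
    intro n e w hw
    subst e
    have : w = (fun j => (args.get j).eval ρ) := funext hw
    rw [this]
  exact key _ (by simp) _ (by simp)

theorem trueStd_congr (φ : PFml) : ∀ {ρ ρ' : ℕ → ℕ}, (∀ v ∈ φ.fv, ρ v = ρ' v) →
    (TrueStd ρ φ ↔ TrueStd ρ' φ) := by
  induction φ with
  | bot => intros; rfl
  | atom i args =>
    intro ρ ρ' hs
    simp only [TrueStd]
    rw [arithStd_list, arithStd_list]
    exact arithStd_congr (List.map_congr_left fun t ht =>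
      PTerm.eval_congr fun v hv => hs v (mem_foldr_fv.2 ⟨t, ht, hv⟩))
  | and φ ψ ih1 ih2 =>
    intro ρ ρ' hs
    simp only [PFml.fv, Finset.mem_union] at hs
    simp only [TrueStd, ih1 fun v hv => hs v (Or.inl hv), ih2 fun v hv => hs v (Or.inr hv)]
  | or φ ψ ih1 ih2 =>
    intro ρ ρ' hs
    simp only [PFml.fv, Finset.mem_union] at hs
    simp only [TrueStd, ih1 fun v hv => hs v (Or.inl hv), ih2 fun v hv => hs v (Or.inr hv)]
  | imp φ ψ ih1 ih2 =>
    intro ρ ρ' hs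
    simp only [PFml.fv, Finset.mem_union] at hs
    simp only [TrueStd, ih1 fun v hv => hs v (Or.inl hv), ih2 fun v hv => hs v (Or.inr hv)]
  | all x φ ih =>
    intro ρ ρ' hs
    simp only [PFml.fv, Finset.mem_erase] at hs
    simp only [TrueStd]
    refine forall_congr' fun a => ih fun v hv => ?_
    by_cases h : v = x
    · simp [h]
    · simp [h, hs v ⟨h, hv⟩]
  | ex x φ ih =>
    intro ρ ρ' hs
    simp only [PFml.fv, Finset.mem_erase] at hs
    simp only [TrueStd]
    refine exists_congr fun a => ih fun v hv => ?_
    by_cases h : v = x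
    · simp [h]
    · simp [h, hs v ⟨h, hv⟩]

theorem trueStd_msub (φ : PFml) : ∀ {s : ℕ → PTerm} {ρ : ℕ → ℕ}, φ.FreeForM s →
    (TrueStd ρ (φ.msub s) ↔ TrueStd (fun v => (s v).eval ρ) φ) := by
  induction φ with
  | bot => intros; rfl
  | atom i args =>
    intro s ρ hs
    simp only [TrueStd, PFml.msub]
    rw [arithStd_list, arithStd_list]
    apply arithStd_congr
    rw [List.map_map]
    exact List.map_congr_left fun t _ => t.eval_msub s ρ
  | and φ ψ ih1 ih2 => intro s ρ hs; simp only [TrueStd, PFml.msub, ih1 hs.1, ih2 hs.2]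
  | or φ ψ ih1 ih2 => intro s ρ hs; simp only [TrueStd, PFml.msub, ih1 hs.1, ih2 hs.2]
  | imp φ ψ ih1 ih2 => intro s ρ hs; simp only [TrueStd, PFml.msub, ih1 hs.1, ih2 hs.2]
  | all x φ ih =>
    intro s ρ hs
    simp only [TrueStd, PFml.msub]
    refine forall_congr' fun a => (ih hs.2).trans (trueStd_congr φ fun v hv => ?_)
    by_cases h : v = x
    · simp [h, PTerm.eval]
    · simp only [h, if_false, ne_eq, not_false_eq_true, Function.update_of_ne]
      apply PTerm.eval_congr
      intro u hu
      have : u ≠ x := fun e => hs.1 v hv h (e ▸ hu)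
      simp [this]
  | ex x φ ih =>
    intro s ρ hs
    simp only [TrueStd, PFml.msub]
    refine exists_congr fun a => (ih hs.2).trans (trueStd_congr φ fun v hv => ?_)
    by_cases h : v = x
    · simp [h, PTerm.eval]
    · simp only [h, if_false, ne_eq, not_false_eq_true, Function.update_of_ne]
      apply PTerm.eval_congr
      intro u hu
      have : u ≠ x := fun e => hs.1 v hv h (e ▸ hu)
      simp [this]

theorem eval_sub1 (x : ℕ) (t : PTerm) (ρ : ℕ → ℕ) :
    (fun v => (sub1 x t v).eval ρ) = Function.update ρ x (t.eval ρ) := by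
  funext v
  by_cases h : v = x
  · subst h; simp [sub1]
  · simp [sub1, h, PTerm.eval]

theorem trueStd_update {x : ℕ} {φ : PFml} {ρ : ℕ → ℕ} (a : ℕ) (hx : x ∉ φ.fv) :
    TrueStd (Function.update ρ x a) φ ↔ TrueStd ρ φ :=
  trueStd_congr φ fun v hv => by
    have : v ≠ x := fun e => hx (e ▸ hv)
    simp [this]

theorem CQC_sound {Γ : List PFml} {φ : PFml} (hd : CQC Γ φ) :
    ∀ ρ : ℕ → ℕ, (∀ ψ ∈ Γ, TrueStd ρ ψ) → TrueStd ρ φ := by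
  induction hd with
  | em φ => intro ρ _; exact Classical.em _
  | hyp hm => intro ρ hΓ; exact hΓ _ hm
  | botE _ ih => intro ρ hΓ; exact (ih ρ hΓ).elim
  | andI _ _ ih1 ih2 => intro ρ hΓ; exact ⟨ih1 ρ hΓ, ih2 ρ hΓ⟩
  | andE1 _ ih => intro ρ hΓ; exact (ih ρ hΓ).1
  | andE2 _ ih => intro ρ hΓ; exact (ih ρ hΓ).2
  | orI1 _ ih => intro ρ hΓ; exact Or.inl (ih ρ hΓ)
  | orI2 _ ih => intro ρ hΓ; exact Or.inr (ih ρ hΓ)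
  | orE _ _ _ ih ih1 ih2 =>
    intro ρ hΓ
    rcases ih ρ hΓ with h | h
    · exact ih1 ρ (List.forall_mem_cons.2 ⟨h, hΓ⟩)
    · exact ih2 ρ (List.forall_mem_cons.2 ⟨h, hΓ⟩)
  | impI _ ih => intro ρ hΓ h; exact ih ρ (List.forall_mem_cons.2 ⟨h, hΓ⟩)
  | impE _ _ ih1 ih2 => intro ρ hΓ; exact ih1 ρ hΓ (ih2 ρ hΓ)
  | allI _ hx ih =>
    intro ρ hΓ a
    exact ih _ fun ψ hψ => (trueStd_update a (hx ψ hψ)).2 (hΓ ψ hψ)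
  | allE t _ hf ih =>
    intro ρ hΓ
    rw [trueStd_msub _ hf, eval_sub1]
    exact ih ρ hΓ _
  | exI t _ hf ih =>
    intro ρ hΓ
    have := ih ρ hΓ
    rw [trueStd_msub _ hf, eval_sub1] at this
    exact ⟨_, this⟩
  | exE _ _ hx hΓx ih1 ih2 =>
    intro ρ hΓ
    obtain ⟨a, ha⟩ := ih1 ρ hΓ
    refine (trueStd_update a hx).1 (ih2 _ (List.forall_mem_cons.2 ⟨ha, ?_⟩))
    exact fun ψ hψ => (trueStd_update a (hΓx ψ hψ)).2 (hΓ ψ hψ)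

/-! Cantor coding -/

theorem cpair_aux (s : ℕ) : (s + 1) * (s + 1 + 1) / 2 = s * (s + 1) / 2 + s + 1 := by
  have : (s + 1) * (s + 1 + 1) = s * (s + 1) + (s + 1) * 2 := by ring
  rw [this, Nat.add_mul_div_right _ _ (by norm_num)]; ring

theorem lrAux_cpair : ∀ n x y : ℕ, cpair x y = n → lrAux n = (x, y) := by
  intro n
  induction n with
  | zero =>
    intro x y h
    rcases x with _ | x
    · rcases y with _ | y
      · rfl
      · simp only [cpair, Nat.zero_add] at h; rw [cpair_aux] at h; omega
    · simp only [cpair] at h; omega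
  | succ n ih =>
    intro x y h
    rcases x with _ | x
    · rcases y with _ | y
      · simp [cpair] at h
      · have : cpair y 0 = n := by
          simp only [cpair, Nat.zero_add, Nat.add_zero] at h ⊢; rw [cpair_aux] at h; omega
        simp [lrAux, ih _ _ this]
    · have : cpair x (y + 1) = n := by
        simp only [cpair] at h ⊢
        have e : x + 1 + y = x + (y + 1) := by ring
        rw [e] at h; omega
      simp [lrAux, ih _ _ this]

theorem cl_cpair (x y : ℕ) : cl (cpair x y) = x := by simp [cl, lrAux_cpair _ x y rfl]
theorem cr_cpair (x y : ℕ) : cr (cpair x y) = y := by simp [cr, lrAux_cpair _ x y rfl]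

theorem lstar_succ (x y : ℕ) : lstar x (y + 1) = lstar (cl x) y := by
  induction y with
  | zero => rfl
  | succ y ih => rw [lstar, ih]; rfl

theorem exists_code (n : ℕ) : ∀ f : ℕ → ℕ, ∃ v, ∀ x < n, g v x = f x := by
  induction n with
  | zero => intro f; exact ⟨0, by simp⟩
  | succ n ih =>
    intro f
    obtain ⟨v, hv⟩ := ih fun x => f (x + 1)
    refine ⟨cpair v (f 0), fun x hx => ?_⟩
    rcases x with _ | x
    · simp [g, lstar, cr_cpair]
    · rw [g, lstar_succ, cl_cpair]; exact hv x (by omega)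

theorem trueStd_bigAnd (ρ : ℕ → ℕ) (l : List PFml) (hl : ∀ φ ∈ l, TrueStd ρ φ) :
    TrueStd ρ (bigAnd l) := by
  induction l with
  | nil => exact id
  | cons a l ih =>
    rw [List.forall_mem_cons] at hl
    exact ⟨hl.1, ih hl.2⟩

theorem trueStd_IRA (ρ : ℕ → ℕ) : ∀ φ ∈ IRAstarAxioms, TrueStd ρ φ := by
  simp only [IRAstarAxioms, List.forall_mem_cons]
  simp only [alls, List.foldr, TrueStd, vZ, vE, vS, vA, vM, PFml.not, PTerm.eval, arithStd,
    List.length_cons, List.length_nil, List.get_eq_getElem, Fin.val_zero, Fin.val_one, Fin.val_two,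
    List.getElem_cons_zero, List.getElem_cons_succ, Nat.reduceAdd, Fin.isValue]
  simp [Function.update_apply]
  exact ⟨fun a b => by ring, fun a b => by ring, fun a b c hab => Or.inl hab.symm,
    fun a => by omega⟩

theorem trueStd_Q (G B : PFml)
    (hGfv : G.fv ⊆ {0, 1, 2}) (hGbv : ∀ v ∈ G.bv, 10 ≤ v)
    (hGdef : ∀ ρ : ℕ → ℕ, TrueStd ρ G ↔ K (ρ 0) (ρ 1) = Part.some (ρ 2))
    (hBfv : B.fv ⊆ {0, 1}) (hBbv : ∀ v ∈ B.bv, 10 ≤ v)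
    (hBdef : ∀ ρ : ℕ → ℕ, TrueStd ρ B ↔ g (ρ 0) (ρ 1) = 1) (ρ : ℕ → ℕ) :
    TrueStd ρ (Qfml G B) := by
  apply trueStd_bigAnd
  intro φ hφ
  rw [List.mem_append] at hφ
  rcases hφ with hφ | hφ
  · exact trueStd_IRA ρ φ hφ
  simp only [List.mem_cons, List.not_mem_nil, or_false] at hφ
  rcases hφ with rfl | rfl | rfl
  · simp only [A26, alls, List.foldr, TrueStd, vE]
    intro a b c d
    rw [trueStd_msub, hGdef, hGdef]
    · rintro ⟨h1, h2⟩
      simp [sub1, PTerm.eval, Function.update_apply] at h1 h2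
      rw [h1] at h2
      simpa [arithStd, PTerm.eval, Function.update_apply] using h2
    · apply PFml.freeFor_of
      intro v _
      by_cases h : v = 2
      · right
        simp only [sub1, h, if_true, PTerm.fv, Finset.mem_singleton, forall_eq]
        intro h; have := hGbv _ h; omega
      · left; simp [sub1, h]
  · simp only [A27, alls, List.foldr, PFml.not, PFml.iff, TrueStd, leF, vA, Hfml, B40, vZ]
    intro y z hn
    apply hn
    classical
    obtain ⟨v, hv⟩ := exists_code (z + 1) fun x => if K y x = Part.some 0 then 1 else 0
    refine ⟨v, fun x hx => ?_⟩
    have hx' : x < z + 1 := by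
      obtain ⟨a, ha⟩ := hx
      simp [arithStd, PTerm.eval, Function.update_apply] at ha
      omega
    have hgv := hv x hx'
    have e1 : ∀ ρ : ℕ → ℕ, TrueStd ρ (B.msub fun v => if v = 0 then .var 4 else
        if v = 1 then .var 0 else .var v) ↔ g (ρ 4) (ρ 0) = 1 := by
      intro ρ
      rw [trueStd_msub, hBdef]
      · simp [PTerm.eval]
      · apply PFml.freeFor_of
        intro v _
        split_ifs
        · right; simp only [PTerm.fv, Finset.mem_singleton, forall_eq]
          intro h; have := hBbv _ h; omega
        · right; simp only [PTerm.fv, Finset.mem_singleton, forall_eq]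
          intro h; have := hBbv _ h; omega
        · left; rfl
    have e2 : ∀ ρ : ℕ → ℕ, TrueStd ρ (G.msub fun v => if v = 0 then .var 1 else
        if v = 1 then .var 0 else if v = 2 then .var 5 else .var v) ↔
        K (ρ 1) (ρ 0) = Part.some (ρ 5) := by
      intro ρ
      rw [trueStd_msub, hGdef]
      · simp [PTerm.eval]
      · apply PFml.freeFor_of
        intro v _
        split_ifs
        · right; simp only [PTerm.fv, Finset.mem_singleton, forall_eq]
          intro h; have := hGbv _ h; omega
        · right; simp only [PTerm.fv, Finset.mem_singleton, forall_eq]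
          intro h; have := hGbv _ h; omega
        · right; simp only [PTerm.fv, Finset.mem_singleton, forall_eq]
          intro h; have := hGbv _ h; omega
        · left; rfl
    simp only [e1, e2]
    simp [arithStd, PTerm.eval, Function.update_apply, hgv]
  · simp only [A28, alls, List.foldr, PFml.not, TrueStd]
    intro a b
    exact Classical.em _

theorem not_CQC_PsiStar (G B : PFml)
    (hGfv : G.fv ⊆ {0, 1, 2}) (hGbv : ∀ v ∈ G.bv, 10 ≤ v)
    (hGdef : ∀ ρ : ℕ → ℕ, TrueStd ρ G ↔ K (ρ 0) (ρ 1) = Part.some (ρ 2))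
    (hBfv : B.fv ⊆ {0, 1}) (hBbv : ∀ v ∈ B.bv, 10 ≤ v)
    (hBdef : ∀ ρ : ℕ → ℕ, TrueStd ρ B ↔ g (ρ 0) (ρ 1) = 1) :
    ¬ CQC [] (PsiStar G B) := by
  intro hd
  have := CQC_sound hd rho0 (by simp)
  exact this (trueStd_Q G B hGfv hGbv hGdef hBfv hBbv hBdef rho0) fun a => (Classical.em _).symm

/-! Derivations in MQC -/

section Deriv
variable {G B : PFml}

theorem MQC.cut {Γ : List PFml} {φ ψ : PFml} (h1 : MQC G B Γ φ) (h2 : MQC G B (φ :: Γ) ψ) :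
    MQC G B Γ ψ := .impE (.impI h2) h1

theorem freeFor_self (x : ℕ) (φ : PFml) : φ.FreeForM (sub1 x (.var x)) := by
  apply PFml.freeFor_of
  intro v _
  left
  by_cases h : v = x <;> simp [sub1, h]

theorem msub_self (x : ℕ) (φ : PFml) : φ.msub (sub1 x (.var x)) = φ := by
  apply PFml.msub_id
  intro v _
  by_cases h : v = x <;> simp [sub1, h]

theorem MQC.allE_self {Γ : List PFml} {x : ℕ} {φ : PFml} (hd : MQC G B Γ (.all x φ)) :
    MQC G B Γ φ := by
  have := MQC.allE (.var x) hd (freeFor_self x φ)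
  rwa [msub_self] at this

theorem MQC.exI_self {Γ : List PFml} {x : ℕ} {φ : PFml} (hd : MQC G B Γ φ) :
    MQC G B Γ (.ex x φ) := by
  apply MQC.exI (.var x) _ (freeFor_self x φ)
  rwa [msub_self]

theorem alls_msub (xs : List ℕ) (φ : PFml) (s : ℕ → PTerm) (hs : ∀ v ∈ xs, s v = .var v) :
    (alls xs φ).msub s = alls xs (φ.msub s) := by
  induction xs with
  | nil => rfl
  | cons x xs ih =>
    rw [List.forall_mem_cons] at hs
    have e : (fun v => if v = x then PTerm.var x else s v) = s := by
      funext v; split_ifs with h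
      · rw [h, hs.1]
      · rfl
    show PFml.all x ((alls xs φ).msub _) = PFml.all x _
    rw [e, ih hs.2]; rfl

theorem bv_alls (xs : List ℕ) (φ : PFml) : (alls xs φ).bv = xs.toFinset ∪ φ.bv := by
  induction xs with
  | nil => simp [alls]
  | cons x xs ih =>
    show insert x (alls xs φ).bv = _
    rw [ih]; ext; simp

theorem fv_alls (xs : List ℕ) (φ : PFml) : (alls xs φ).fv = φ.fv \ xs.toFinset := by
  induction xs with
  | nil => simp [alls]
  | cons x xs ih =>
    show (alls xs φ).fv.erase x = _
    rw [ih]; ext; simp; tauto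

theorem MQC.allIs {Γ : List PFml} {φ : PFml} (xs : List ℕ) (hd : MQC G B Γ φ)
    (hx : ∀ x ∈ xs, ∀ ψ ∈ Γ, x ∉ ψ.fv) : MQC G B Γ (alls xs φ) := by
  induction xs with
  | nil => exact hd
  | cons x xs ih =>
    rw [List.forall_mem_cons] at hx
    exact MQC.allI (ih hx.2) hx.1

theorem MQC.instAll {Γ : List PFml} (s : ℕ → PTerm) (xs : List ℕ) : ∀ (φ : PFml), xs.Nodup →
    (∀ x ∈ xs, ∀ u ∈ (s x).fv, u ∉ xs ∧ u ∉ φ.bv) → MQC G B Γ (alls xs φ) →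
    MQC G B Γ (φ.msub fun v => if v ∈ xs then s v else .var v) := by
  induction xs with
  | nil =>
    intro φ _ _ hd
    rw [φ.msub_id (by simp)]; exact hd
  | cons x xs ih =>
    intro φ hn hs hd
    rw [List.nodup_cons] at hn
    have hsx := hs x (by simp)
    have hf : (alls xs φ).FreeForM (sub1 x (s x)) := by
      apply PFml.freeFor_of
      intro v _
      by_cases h : v = x
      · right
        subst h
        intro u hu
        simp only [sub1, if_true] at hu
        have := hsx u hu
        simp only [bv_alls, Finset.mem_union, List.mem_toFinset]
        simp at this; tauto
      · left; simp [sub1, h]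
    have hf' : φ.FreeForM (sub1 x (s x)) := by
      apply PFml.freeFor_of
      intro v _
      by_cases h : v = x
      · right
        subst h
        intro u hu
        simp only [sub1, if_true] at hu
        exact (hsx u hu).2
      · left; simp [sub1, h]
    have h1 := MQC.allE (s x) hd hf
    have h1' : MQC G B Γ ((alls xs φ).msub (sub1 x (s x))) := h1
    rw [alls_msub xs φ (sub1 x (s x))] at h1'
    · have h2 := ih _ hn.2 (by
        intro y hy u hu
        have := hs y (by simp [hy]) u hu
        rw [PFml.bv_msub]
        simp at this; tauto) h1'
      rw [PFml.msub_msub _ _ hf'] at h2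
      convert h2 using 2
      funext v
      by_cases h : v = x
      · subst h
        simp only [List.mem_cons, true_or, if_true, sub1]
        conv_lhs => rw [← (s v).msub_var]
        apply PTerm.msub_congr
        intro u hu
        have := (hsx u hu).1
        simp at this
        simp [this.2]
      · simp [sub1, h, PTerm.msub]
    · intro v hv
      have : v ≠ x := fun e => hn.1 (e ▸ hv)
      simp [sub1, this]

theorem exists_bound (l : List (Finset ℕ)) : ∃ N, ∀ F ∈ l, ∀ u ∈ F, u < N := by
  induction l with
  | nil => exact ⟨0, by simp⟩
  | cons F l ih =>
    obtain ⟨N, hN⟩ := ih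
    refine ⟨max N (F.sup id + 1), ?_⟩
    intro F' hF' u hu
    rcases List.mem_cons.1 hF' with rfl | hF'
    · have : u ≤ F'.sup id := Finset.le_sup (f := id) hu
      omega
    · have := hN F' hF' u hu; omega

theorem MQC.instN {Γ : List PFml} (s : ℕ → PTerm) (xs : List ℕ) (φ : PFml) (hn : xs.Nodup)
    (hφ : ∀ v ∈ φ.fv, v ∈ xs) (hs : ∀ x ∈ xs, ∀ u ∈ (s x).fv, u ∉ φ.bv)
    (hd : MQC G B Γ (alls xs φ)) : MQC G B Γ (φ.msub s) := by
  obtain ⟨N, hN⟩ := exists_bound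
    (φ.bv :: xs.toFinset :: (Γ.map PFml.fv ++ xs.map fun x => (s x).fv))
  simp only [List.forall_mem_cons, List.mem_append, List.mem_map, List.mem_toFinset] at hN
  obtain ⟨hN1, hN2, hN3⟩ := hN
  have h1 := MQC.instAll (fun x => .var (N + x)) xs φ hn (by
    intro x hx u hu
    simp [PTerm.fv] at hu
    subst hu
    exact ⟨fun h => by have := hN2 _ h; omega, fun h => by have := hN1 _ h; omega⟩) hd
  have hf : φ.FreeForM (fun v => if v ∈ xs then .var (N + v) else .var v) := by
    apply PFml.freeFor_of
    intro v _
    split_ifs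
    · right
      intro u hu
      simp [PTerm.fv] at hu
      subst hu
      exact fun h => by have := hN1 _ h; omega
    · left; rfl
  have h2 := MQC.allIs (xs.map (N + ·)) h1 (by
    intro y hy ψ hψ hu
    obtain ⟨x, hx, rfl⟩ := List.mem_map.1 hy
    have := hN3 _ (Or.inl ⟨ψ, hψ, rfl⟩) _ hu
    omega)
  have h3 := MQC.instAll (fun y => s (y - N)) (xs.map (N + ·)) _
    (hn.map (fun a b hab => by simpa using hab)) (by
      intro y hy u hu
      obtain ⟨x, hx, rfl⟩ := List.mem_map.1 hy
      simp only [Nat.add_sub_cancel_left] at hu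
      rw [PFml.bv_msub]
      refine ⟨fun h => ?_, hs x hx u hu⟩
      obtain ⟨x', hx', rfl⟩ := List.mem_map.1 h
      have := hN3 _ (Or.inr ⟨x, hx, rfl⟩) _ hu
      omega) h2
  rw [PFml.msub_msub _ _ hf] at h3
  convert h3 using 1
  apply PFml.msub_congr
  intro v hv
  have hv' := hφ v hv
  simp [hv', PTerm.msub]

theorem MQC.bigAnd_mem {Γ : List PFml} {φ : PFml} {l : List PFml} (hm : φ ∈ l)
    (hd : MQC G B Γ (bigAnd l)) : MQC G B Γ φ := by
  induction l with
  | nil => simp at hm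
  | cons a l ih =>
    rcases List.mem_cons.1 hm with rfl | hm
    · exact .andE1 hd
    · exact ih hm (.andE2 hd)

theorem MQC.qAx {Γ : List PFml} (hQ : Qfml G B ∈ Γ) (k : ℕ) (hk : k < 25) :
    MQC G B Γ (IRAstarAxioms[k]'hk) :=
  MQC.bigAnd_mem (List.mem_append_left _ (List.getElem_mem _)) (.hyp hQ)

theorem MQC.qInst {Γ : List PFml} (hQ : Qfml G B ∈ Γ) (k : ℕ) (hk : k < 25) (n : ℕ) (φ : PFml)
    (hφ : IRAstarAxioms[k]'hk = alls (List.range n) φ)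
    (hfv : ∀ v ∈ φ.fv, v ∈ List.range n) (hbv : φ.bv = ∅) (s : ℕ → PTerm) :
    MQC G B Γ (φ.msub s) :=
  MQC.instN s (List.range n) φ List.nodup_range hfv (by simp [hbv]) (hφ ▸ MQC.qAx hQ k hk)

theorem MQC.t_curry {Γ : List PFml} {p q r : PFml} (h1 : MQC G B Γ ((p.and q).imp r))
    (h2 : MQC G B Γ p) : MQC G B Γ (q.imp r) := by
  have : MQC G B Γ (((p.and q).imp r).imp (p.imp (q.imp r))) :=
    .impI (.impI (.impI (.impE (.hyp (φ := (p.and q).imp r) (by simp))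
      (.andI (.hyp (by simp)) (.hyp (by simp))))))
  exact .impE (.impE this h1) h2

theorem MQC.t_curry' {Γ : List PFml} {p q r : PFml} (h1 : MQC G B Γ ((p.and q).imp r))
    (h2 : MQC G B Γ q) : MQC G B Γ (p.imp r) := by
  have : MQC G B Γ (((p.and q).imp r).imp (q.imp (p.imp r))) :=
    .impI (.impI (.impI (.impE (.hyp (φ := (p.and q).imp r) (by simp))
      (.andI (.hyp (by simp)) (.hyp (by simp))))))
  exact .impE (.impE this h1) h2

theorem MQC.t_trans {Γ : List PFml} {p q r : PFml} (h1 : MQC G B Γ (p.imp q))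
    (h2 : MQC G B Γ (q.imp r)) : MQC G B Γ (p.imp r) := by
  have : MQC G B Γ ((p.imp q).imp ((q.imp r).imp (p.imp r))) :=
    .impI (.impI (.impI (.impE (.hyp (φ := q.imp r) (by simp))
      (.impE (.hyp (φ := p.imp q) (by simp)) (.hyp (by simp))))))
  exact .impE (.impE this h1) h2

theorem MQC.t_and {Γ : List PFml} {p q p' q' : PFml} (h1 : MQC G B Γ (p.imp p'))
    (h2 : MQC G B Γ (q.imp q')) : MQC G B Γ ((p.and q).imp (p'.and q')) := by
  have : MQC G B Γ ((p.imp p').imp ((q.imp q').imp ((p.and q).imp (p'.and q')))) :=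
    .impI (.impI (.impI (.andI
      (.impE (.hyp (φ := p.imp p') (by simp)) (.andE1 (.hyp (φ := p.and q) (by simp))))
      (.impE (.hyp (φ := q.imp q') (by simp)) (.andE2 (.hyp (φ := p.and q) (by simp)))))))
  exact .impE (.impE this h1) h2

theorem MQC.t_or {Γ : List PFml} {p q p' q' : PFml} (h1 : MQC G B Γ (p.imp p'))
    (h2 : MQC G B Γ (q.imp q')) : MQC G B Γ ((p.or q).imp (p'.or q')) := by
  have : MQC G B Γ ((p.imp p').imp ((q.imp q').imp ((p.or q).imp (p'.or q')))) :=
    .impI (.impI (.impI (.orE (.hyp (φ := p.or q) (by simp))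
      (.orI1 (.impE (.hyp (φ := p.imp p') (by simp)) (.hyp (by simp))))
      (.orI2 (.impE (.hyp (φ := q.imp q') (by simp)) (.hyp (by simp)))))))
  exact .impE (.impE this h1) h2

theorem MQC.t_imp {Γ : List PFml} {p q p' q' : PFml} (h1 : MQC G B Γ (p'.imp p))
    (h2 : MQC G B Γ (q.imp q')) : MQC G B Γ ((p.imp q).imp (p'.imp q')) := by
  have : MQC G B Γ ((p'.imp p).imp ((q.imp q').imp ((p.imp q).imp (p'.imp q')))) :=
    .impI (.impI (.impI (.impI (.impE (.hyp (φ := q.imp q') (by simp))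
      (.impE (.hyp (φ := p.imp q) (by simp))
        (.impE (.hyp (φ := p'.imp p) (by simp)) (.hyp (by simp))))))))
  exact .impE (.impE this h1) h2

theorem MQC.t_all {Γ : List PFml} {x : ℕ} {p p' : PFml} (hx : ∀ ψ ∈ Γ, x ∉ ψ.fv)
    (h1 : MQC G B Γ (p.imp p')) : MQC G B Γ ((PFml.all x p).imp (.all x p')) := by
  have : MQC G B Γ ((PFml.all x (p.imp p')).imp ((PFml.all x p).imp (.all x p'))) := by
    refine .impI (.impI (.allI (.impE (φ := p)
      (MQC.allE_self (x := x) (.hyp (by simp))) (MQC.allE_self (x := x) (.hyp (by simp)))) ?_))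
    simp only [List.forall_mem_cons]
    exact ⟨by simp [PFml.fv], by simp [PFml.fv], hx⟩
  exact .impE this (.allI h1 hx)

theorem MQC.t_ex {Γ : List PFml} {x : ℕ} {p p' : PFml} (hx : ∀ ψ ∈ Γ, x ∉ ψ.fv)
    (h1 : MQC G B Γ (p.imp p')) : MQC G B Γ ((PFml.ex x p).imp (.ex x p')) := by
  have : MQC G B Γ ((PFml.all x (p.imp p')).imp ((PFml.ex x p).imp (.ex x p'))) := by
    refine .impI (.impI (.exE (x := x) (φ := p) (.hyp (by simp)) (MQC.exI_self (.impE (φ := p)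
      (MQC.allE_self (x := x) (.hyp (by simp))) (.hyp (by simp)))) (by simp [PFml.fv]) ?_))
    simp only [List.forall_mem_cons]
    exact ⟨by simp [PFml.fv], by simp [PFml.fv], hx⟩
  exact .impE this (.allI h1 hx)

/-- reflexivity of `E` -/
def reflE : PFml := .all 0 (vE (.var 0) (.var 0))

theorem MQC.e_refl {Γ : List PFml} (hR : reflE ∈ Γ) (t : PTerm) : MQC G B Γ (vE t t) :=
  MQC.allE (x := 0) (φ := vE (.var 0) (.var 0)) t (.hyp hR) trivial

theorem MQC.e_tr {Γ : List PFml} (hQ : Qfml G B ∈ Γ) (t u w : PTerm) :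
    MQC G B Γ (((vE t u).and (vE t w)).imp (vE u w)) :=
  MQC.qInst hQ 2 (by decide) 3
    (((vE (.var 0) (.var 1)).and (vE (.var 0) (.var 2))).imp (vE (.var 1) (.var 2)))
    rfl (by decide) (by decide) (argSub [t, u, w])

theorem MQC.e_symm {Γ : List PFml} (hQ : Qfml G B ∈ Γ) (hR : reflE ∈ Γ) {t u : PTerm}
    (hd : MQC G B Γ (vE t u)) : MQC G B Γ (vE u t) :=
  .impE (MQC.e_tr hQ t u t) (.andI hd (MQC.e_refl hR t))

theorem MQC.c_Z {Γ : List PFml} (hQ : Qfml G B ∈ Γ) (t u : PTerm) :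
    MQC G B Γ (((vE t u).and (vZ t)).imp (vZ u)) :=
  MQC.qInst hQ 15 (by decide) 2
    (((vE (.var 0) (.var 1)).and (vZ (.var 0))).imp (vZ (.var 1)))
    rfl (by decide) (by decide) (argSub [t, u])

theorem MQC.c_E {Γ : List PFml} (hQ : Qfml G B ∈ Γ) {a b a' b' : PTerm}
    (h1 : MQC G B Γ (vE a a')) (h2 : MQC G B Γ (vE b b')) :
    MQC G B Γ ((vE a b).imp (vE a' b')) :=
  MQC.t_trans (MQC.t_curry' (MQC.e_tr hQ a b a') h1) (MQC.t_curry' (MQC.e_tr hQ b a' b') h2)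

theorem MQC.c_S {Γ : List PFml} (hQ : Qfml G B ∈ Γ) {a b a' b' : PTerm}
    (h1 : MQC G B Γ (vE a a')) (h2 : MQC G B Γ (vE b b')) :
    MQC G B Γ ((vS a b).imp (vS a' b')) := by
  have e1 : MQC G B Γ (((vE a a').and (vS a b)).imp (vS a' b)) :=
    MQC.qInst hQ 3 (by decide) 3
      (((vE (.var 0) (.var 1)).and (vS (.var 0) (.var 2))).imp (vS (.var 1) (.var 2)))
      rfl (by decide) (by decide) (argSub [a, a', b])
  have e2 : MQC G B Γ (((vS a' b).and (vE b b')).imp (vS a' b')) :=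
    MQC.qInst hQ 18 (by decide) 3
      (((vS (.var 0) (.var 1)).and (vE (.var 1) (.var 2))).imp (vS (.var 0) (.var 2)))
      rfl (by decide) (by decide) (argSub [a', b, b'])
  exact MQC.t_trans (MQC.t_curry e1 h1) (MQC.t_curry' e2 h2)

theorem MQC.c_A {Γ : List PFml} (hQ : Qfml G B ∈ Γ) {a b c a' b' c' : PTerm}
    (h1 : MQC G B Γ (vE a a')) (h2 : MQC G B Γ (vE b b')) (h3 : MQC G B Γ (vE c c')) :
    MQC G B Γ ((vA a b c).imp (vA a' b' c')) := by
  have e1 : MQC G B Γ (((vE a a').and (vA a b c)).imp (vA a' b c)) :=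
    MQC.qInst hQ 8 (by decide) 4
      (((vE (.var 0) (.var 1)).and (vA (.var 0) (.var 2) (.var 3))).imp
        (vA (.var 1) (.var 2) (.var 3)))
      rfl (by decide) (by decide) (argSub [a, a', b, c])
  have e2 : MQC G B Γ (((vE b b').and (vA a' b c)).imp (vA a' b' c)) :=
    MQC.qInst hQ 9 (by decide) 4
      (((vE (.var 1) (.var 2)).and (vA (.var 0) (.var 1) (.var 3))).imp
        (vA (.var 0) (.var 2) (.var 3)))
      rfl (by decide) (by decide) (argSub [a', b, b', c])
  have e3 : MQC G B Γ (((vA a' b' c).and (vE c c')).imp (vA a' b' c')) :=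
    MQC.qInst hQ 21 (by decide) 4
      (((vA (.var 0) (.var 1) (.var 2)).and (vE (.var 2) (.var 3))).imp
        (vA (.var 0) (.var 1) (.var 3)))
      rfl (by decide) (by decide) (argSub [a', b', c, c'])
  exact MQC.t_trans (MQC.t_curry e1 h1) (MQC.t_trans (MQC.t_curry e2 h2) (MQC.t_curry' e3 h3))

theorem MQC.c_M {Γ : List PFml} (hQ : Qfml G B ∈ Γ) {a b c a' b' c' : PTerm}
    (h1 : MQC G B Γ (vE a a')) (h2 : MQC G B Γ (vE b b')) (h3 : MQC G B Γ (vE c c')) :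
    MQC G B Γ ((vM a b c).imp (vM a' b' c')) := by
  have e1 : MQC G B Γ (((vE a a').and (vM a b c)).imp (vM a' b c)) :=
    MQC.qInst hQ 10 (by decide) 4
      (((vE (.var 0) (.var 1)).and (vM (.var 0) (.var 2) (.var 3))).imp
        (vM (.var 1) (.var 2) (.var 3)))
      rfl (by decide) (by decide) (argSub [a, a', b, c])
  have e2 : MQC G B Γ (((vE b b').and (vM a' b c)).imp (vM a' b' c)) :=
    MQC.qInst hQ 11 (by decide) 4
      (((vE (.var 1) (.var 2)).and (vM (.var 0) (.var 1) (.var 3))).imp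
        (vM (.var 0) (.var 2) (.var 3)))
      rfl (by decide) (by decide) (argSub [a', b, b', c])
  have e3 : MQC G B Γ (((vM a' b' c).and (vE c c')).imp (vM a' b' c')) :=
    MQC.qInst hQ 24 (by decide) 4
      (((vM (.var 0) (.var 1) (.var 2)).and (vE (.var 2) (.var 3))).imp
        (vM (.var 0) (.var 1) (.var 3)))
      rfl (by decide) (by decide) (argSub [a', b', c, c'])
  exact MQC.t_trans (MQC.t_curry e1 h1) (MQC.t_trans (MQC.t_curry e2 h2) (MQC.t_curry' e3 h3))

/-- All atoms of the formula are arithmetical. -/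
def Ar : PFml → Prop
  | .bot => True
  | .atom i args => arithSlot args.length i
  | .and φ ψ => Ar φ ∧ Ar ψ
  | .or φ ψ => Ar φ ∧ Ar ψ
  | .imp φ ψ => Ar φ ∧ Ar ψ
  | .all _ φ => Ar φ
  | .ex _ φ => Ar φ

theorem Ar_leF (z x : ℕ) (t : PTerm) : Ar (leF z x t) := by
  simp [leF, Ar, vA, arithSlot]

theorem Ar_of_delta0 {φ : PFml} (hφ : IsDelta0 φ) : Ar φ := by
  induction hφ with
  | bot => trivial
  | atom h => exact h
  | and _ _ h1 h2 => exact ⟨h1, h2⟩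
  | or _ _ h1 h2 => exact ⟨h1, h2⟩
  | imp _ _ h1 h2 => exact ⟨h1, h2⟩
  | ball _ _ _ _ ih => exact ⟨Ar_leF _ _ _, ih⟩
  | bex _ _ _ _ ih => exact ⟨Ar_leF _ _ _, ih⟩

theorem Ar_of_sigma {φ : PFml} (hφ : IsSigma φ) : Ar φ := by
  induction hφ with
  | delta0 h => exact Ar_of_delta0 h
  | and _ _ h1 h2 => exact ⟨h1, h2⟩
  | or _ _ h1 h2 => exact ⟨h1, h2⟩
  | ball _ _ _ _ ih => exact ⟨Ar_leF _ _ _, ih⟩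
  | bex _ _ _ _ ih => exact ⟨Ar_leF _ _ _, ih⟩
  | ex _ ih => exact ih

theorem Ar_msub (φ : PFml) : ∀ s, Ar (φ.msub s) ↔ Ar φ := by
  induction φ <;> intro s <;> simp_all [PFml.msub, Ar]

theorem Ar_alls (xs : List ℕ) (φ : PFml) : Ar (alls xs φ) ↔ Ar φ := by
  induction xs with
  | nil => rfl
  | cons x xs ih => exact ih

theorem MQC.cong {Γ : List PFml} (hQ : Qfml G B ∈ Γ) (hR : reflE ∈ Γ) (φ : PFml) : Ar φ →
    (∀ x ∈ φ.bv, ∀ ψ ∈ Γ, x ∉ ψ.fv) → ∀ s s' : ℕ → PTerm,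
    (∀ v ∈ φ.fv, MQC G B Γ (vE (s v) (s' v))) →
    MQC G B Γ ((φ.msub s).imp (φ.msub s')) := by
  induction φ with
  | bot => intro _ _ s s' _; exact .impI (.hyp (by simp [PFml.msub]))
  | atom i args =>
    intro ha _ s s' hs
    have ht : ∀ t ∈ args, MQC G B Γ (vE (t.msub s) (t.msub s')) := by
      intro t ht
      cases t with
      | var v => exact hs v (mem_foldr_fv.2 ⟨_, ht, by simp [PTerm.fv]⟩)
      | const c => exact MQC.e_refl hR _
    rcases ha with ⟨hl, rfl⟩ | ⟨hl, hi⟩ | ⟨hl, hi⟩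
    · obtain ⟨a, rfl⟩ := List.length_eq_one_iff.1 hl
      exact MQC.t_curry (MQC.c_Z hQ _ _) (ht a (by simp))
    · obtain ⟨a, b, rfl⟩ := List.length_eq_two.1 hl
      have : i = 0 ∨ i = 1 := by omega
      rcases this with rfl | rfl
      · exact MQC.c_E hQ (ht a (by simp)) (ht b (by simp))
      · exact MQC.c_S hQ (ht a (by simp)) (ht b (by simp))
    · obtain ⟨a, b, c, rfl⟩ := List.length_eq_three.1 hl
      have : i = 0 ∨ i = 1 := by omega
      rcases this with rfl | rfl
      · exact MQC.c_A hQ (ht a (by simp)) (ht b (by simp)) (ht c (by simp))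
      · exact MQC.c_M hQ (ht a (by simp)) (ht b (by simp)) (ht c (by simp))
  | and φ ψ ih1 ih2 =>
    intro ha hb s s' hs
    simp only [PFml.fv, PFml.bv, Finset.mem_union] at hs hb
    exact MQC.t_and (ih1 ha.1 (fun x hx => hb x (Or.inl hx)) s s' fun v hv => hs v (Or.inl hv))
      (ih2 ha.2 (fun x hx => hb x (Or.inr hx)) s s' fun v hv => hs v (Or.inr hv))
  | or φ ψ ih1 ih2 =>
    intro ha hb s s' hs
    simp only [PFml.fv, PFml.bv, Finset.mem_union] at hs hb
    exact MQC.t_or (ih1 ha.1 (fun x hx => hb x (Or.inl hx)) s s' fun v hv => hs v (Or.inl hv))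
      (ih2 ha.2 (fun x hx => hb x (Or.inr hx)) s s' fun v hv => hs v (Or.inr hv))
  | imp φ ψ ih1 ih2 =>
    intro ha hb s s' hs
    simp only [PFml.fv, PFml.bv, Finset.mem_union] at hs hb
    exact MQC.t_imp (ih1 ha.1 (fun x hx => hb x (Or.inl hx)) s' s fun v hv =>
        MQC.e_symm hQ hR (hs v (Or.inl hv)))
      (ih2 ha.2 (fun x hx => hb x (Or.inr hx)) s s' fun v hv => hs v (Or.inr hv))
  | all x φ ih =>
    intro ha hb s s' hs
    simp only [PFml.fv, PFml.bv, Finset.mem_erase, Finset.mem_insert] at hs hb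
    refine MQC.t_all (hb x (Or.inl rfl)) (ih ha (fun x hx => hb x (Or.inr hx)) _ _ fun v hv => ?_)
    by_cases h : v = x
    · simp only [h, if_true]; exact MQC.e_refl hR _
    · simp only [h, if_false]; exact hs v ⟨h, hv⟩
  | ex x φ ih =>
    intro ha hb s s' hs
    simp only [PFml.fv, PFml.bv, Finset.mem_erase, Finset.mem_insert] at hs hb
    refine MQC.t_ex (hb x (Or.inl rfl)) (ih ha (fun x hx => hb x (Or.inr hx)) _ _ fun v hv => ?_)
    by_cases h : v = x
    · simp only [h, if_true]; exact MQC.e_refl hR _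
    · simp only [h, if_false]; exact hs v ⟨h, hv⟩

/-- The substitution of `a, b, c` for the distinguished variables `0, 1, 2`. -/
def tri (a b c : PTerm) : ℕ → PTerm := fun v =>
  if v = 0 then a else if v = 1 then b else if v = 2 then c else .var v

/-- `∃w (Z(w) & G(a,a,w))` with bound variable `7`. -/
def Ph (G : PFml) (a : PTerm) : PFml := .ex 7 ((vZ (.var 7)).and (G.msub (tri a a (.var 7))))

/-- The binary relation to which `nCT*` is applied. -/
def Q2 (G : PFml) (a b : PTerm) : PFml :=
  ((Ph G a).not.and (vZ b)).or ((Ph G a).and (vZ b).not)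

theorem tri_freeFor (hGbv : ∀ v ∈ G.bv, 10 ≤ v) {a b c : PTerm} (ha : ∀ u ∈ a.fv, u < 10)
    (hb : ∀ u ∈ b.fv, u < 10) (hc : ∀ u ∈ c.fv, u < 10) : G.FreeForM (tri a b c) := by
  apply PFml.freeFor_of
  intro v _
  unfold tri
  split_ifs
  · right; intro u hu h; have := hGbv u h; have := ha u hu; omega
  · right; intro u hu h; have := hGbv u h; have := hb u hu; omega
  · right; intro u hu h; have := hGbv u h; have := hc u hu; omega
  · left; rfl

theorem tri_msub (hGfv : G.fv ⊆ {0, 1, 2}) (hGbv : ∀ v ∈ G.bv, 10 ≤ v) {a b c : PTerm}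
    (ha : ∀ u ∈ a.fv, u < 10) (hb : ∀ u ∈ b.fv, u < 10) (hc : ∀ u ∈ c.fv, u < 10)
    (s : ℕ → PTerm) :
    (G.msub (tri a b c)).msub s = G.msub (tri (a.msub s) (b.msub s) (c.msub s)) := by
  rw [PFml.msub_msub _ _ (tri_freeFor hGbv ha hb hc)]
  apply PFml.msub_congr
  intro v hv
  have := hGfv hv
  simp only [Finset.mem_insert, Finset.mem_singleton] at this
  rcases this with rfl | rfl | rfl <;> simp [tri]

theorem tri_fv (hGfv : G.fv ⊆ {0, 1, 2}) {a b c : PTerm} {v : ℕ}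
    (hv : v ∈ (G.msub (tri a b c)).fv) : v ∈ a.fv ∨ v ∈ b.fv ∨ v ∈ c.fv := by
  obtain ⟨u, hu, hv⟩ := PFml.fv_msub _ hv
  have := hGfv hu
  simp only [Finset.mem_insert, Finset.mem_singleton] at this
  rcases this with rfl | rfl | rfl <;> simp [tri] at hv <;> tauto

theorem lt_var {k n : ℕ} (hk : k < n) : ∀ u ∈ (PTerm.var k).fv, u < n := by
  simpa [PTerm.fv] using hk

theorem Ph_fv (hGfv : G.fv ⊆ {0, 1, 2}) {a : PTerm} {v : ℕ} (hv : v ∈ (Ph G a).fv) :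
    v ∈ a.fv := by
  simp only [Ph, PFml.fv, vZ, Finset.mem_erase, Finset.mem_union] at hv
  obtain ⟨h7, hv | hv⟩ := hv
  · simp [PTerm.fv] at hv; exact absurd hv h7
  · rcases tri_fv hGfv hv with h | h | h
    · exact h
    · exact h
    · simp [PTerm.fv] at h; exact absurd h h7

theorem Q2_fv (hGfv : G.fv ⊆ {0, 1, 2}) {a b : PTerm} {v : ℕ} (hv : v ∈ (Q2 G a b).fv) :
    v ∈ a.fv ∨ v ∈ b.fv := by
  simp only [Q2, PFml.not, PFml.fv, vZ, Finset.mem_union, List.foldr, Finset.notMem_empty,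
    or_false] at hv
  rcases hv with (h | h) | (h | h)
  · exact Or.inl (Ph_fv hGfv h)
  · exact Or.inr h
  · exact Or.inl (Ph_fv hGfv h)
  · exact Or.inr h

theorem Ph_bv (hGbv : ∀ v ∈ G.bv, 10 ≤ v) {a : PTerm} {v : ℕ} (hv : v ∈ (Ph G a).bv) :
    7 ≤ v := by
  simp only [Ph, PFml.bv, vZ, PFml.bv_msub, Finset.mem_insert, Finset.empty_union] at hv
  rcases hv with h | h
  · omega
  · have := hGbv v h; omega

theorem Q2_bv (hGbv : ∀ v ∈ G.bv, 10 ≤ v) {a b : PTerm} {v : ℕ} (hv : v ∈ (Q2 G a b).bv) :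
    7 ≤ v := by
  simp only [Q2, PFml.not, PFml.bv, vZ, Finset.mem_union, Finset.notMem_empty, or_false] at hv
  rcases hv with h | h <;> exact Ph_bv hGbv h

theorem Ph_msub (hGfv : G.fv ⊆ {0, 1, 2}) (hGbv : ∀ v ∈ G.bv, 10 ≤ v) {a : PTerm}
    (ha : ∀ u ∈ a.fv, u < 7) (s : ℕ → PTerm) : (Ph G a).msub s = Ph G (a.msub s) := by
  have ha' : ∀ u ∈ a.fv, u < 10 := fun u hu => by have := ha u hu; omega
  have e : a.msub (fun v => if v = 7 then .var 7 else s v) = a.msub s := by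
    apply PTerm.msub_congr
    intro u hu
    have := ha u hu
    simp [show u ≠ 7 by omega]
  simp only [Ph, PFml.msub, vZ, List.map, PTerm.msub, if_true]
  rw [tri_msub hGfv hGbv ha' ha' (lt_var (by omega)), e]
  rfl

theorem Q2_msub (hGfv : G.fv ⊆ {0, 1, 2}) (hGbv : ∀ v ∈ G.bv, 10 ≤ v) {a b : PTerm}
    (ha : ∀ u ∈ a.fv, u < 7) (s : ℕ → PTerm) :
    (Q2 G a b).msub s = Q2 G (a.msub s) (b.msub s) := by
  simp only [Q2, PFml.msub, PFml.not, Ph_msub hGfv hGbv ha s, vZ, List.map]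

theorem Q2_freeFor (hGbv : ∀ v ∈ G.bv, 10 ≤ v) {a b : PTerm} {s : ℕ → PTerm}
    (hs : ∀ v, s v = .var v ∨ ∀ u ∈ (s v).fv, u < 7) : (Q2 G a b).FreeForM s := by
  apply PFml.freeFor_of
  intro v _
  refine (hs v).imp id fun h u hu hb => ?_
  have := Q2_bv hGbv hb
  have := h u hu
  omega

theorem Ar_Q2 (hG : Ar G) (a b : PTerm) : Ar (Q2 G a b) := by
  have : Ar (Ph G a) := ⟨by simp [vZ, Ar, arithSlot], (Ar_msub _ _).2 hG⟩
  have hz : Ar (vZ b) := by simp [vZ, Ar, arithSlot]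
  exact ⟨⟨⟨this, trivial⟩, hz⟩, this, hz, trivial⟩

/-- The substitution for the predicate variables. -/
def sig (G : PFml) (n i : ℕ) : PFml :=
  if n = 1 ∧ i = 1 then .bot else if n = 2 ∧ i = 2 then Q2 G (.var 0) (.var 1)
  else .atom i ((List.range n).map .var)

theorem sig_fv (hGfv : G.fv ⊆ {0, 1, 2}) (n i x : ℕ) :
    x ∉ (sig G n i).fv \ Finset.range n := by
  rw [Finset.mem_sdiff, not_and_not_right]
  unfold sig
  split_ifs with h1 h2
  · simp [PFml.fv]
  · intro h
    obtain ⟨rfl, rfl⟩ := h2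
    rcases Q2_fv hGfv h with h | h <;> simp [PTerm.fv] at h <;> simp [h]
  · intro h
    simp only [PFml.fv] at h
    rw [mem_foldr_fv] at h
    obtain ⟨t, ht, hx⟩ := h
    obtain ⟨u, hu, rfl⟩ := List.mem_map.1 ht
    simp [PTerm.fv] at hx
    subst hx
    simpa using hu

theorem sig_slot {n i : ℕ} (hs : arithSlot n i) :
    sig G n i = .atom i ((List.range n).map .var) := by
  unfold sig arithSlot at *
  rw [if_neg (by omega), if_neg (by omega)]

theorem map_argSub (args : List PTerm) :
    ((List.range args.length).map PTerm.var).map (PTerm.msub (argSub args)) = args := by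
  apply List.ext_getElem
  · simp
  · intro k h1 h2
    simp [PTerm.msub, argSub, h2]

theorem substP_Ar (φ : PFml) (hφ : Ar φ) : φ.substP (sig G) = φ := by
  induction φ with
  | bot => rfl
  | atom i args =>
    simp only [PFml.substP]
    rw [sig_slot hφ]
    simp only [PFml.msub, map_argSub]
  | and φ ψ ih1 ih2 => simp [PFml.substP, ih1 hφ.1, ih2 hφ.2]
  | or φ ψ ih1 ih2 => simp [PFml.substP, ih1 hφ.1, ih2 hφ.2]
  | imp φ ψ ih1 ih2 => simp [PFml.substP, ih1 hφ.1, ih2 hφ.2]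
  | all x φ ih => simp [PFml.substP, ih hφ]
  | ex x φ ih => simp [PFml.substP, ih hφ]

theorem accept_Ar (hGfv : G.fv ⊆ {0, 1, 2}) (φ : PFml) (hφ : Ar φ) : φ.AcceptableP (sig G) := by
  induction φ with
  | bot => trivial
  | atom i args =>
    simp only [PFml.AcceptableP]
    rw [sig_slot hφ]
    trivial
  | and φ ψ ih1 ih2 => exact ⟨ih1 hφ.1, ih2 hφ.2⟩
  | or φ ψ ih1 ih2 => exact ⟨ih1 hφ.1, ih2 hφ.2⟩
  | imp φ ψ ih1 ih2 => exact ⟨ih1 hφ.1, ih2 hφ.2⟩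
  | all x φ ih => exact ⟨fun n i _ => sig_fv hGfv n i x, ih hφ⟩
  | ex x φ ih => exact ⟨fun n i _ => sig_fv hGfv n i x, ih hφ⟩

theorem Ar_bigAnd (l : List PFml) (hl : ∀ φ ∈ l, Ar φ) : Ar (bigAnd l) := by
  induction l with
  | nil => exact ⟨trivial, trivial⟩
  | cons a l ih =>
    rw [List.forall_mem_cons] at hl
    exact ⟨hl.1, ih hl.2⟩

theorem Ar_Q (hG : Ar G) (hB : Ar B) : Ar (Qfml G B) := by
  apply Ar_bigAnd
  intro φ hφ
  rw [List.mem_append] at hφ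
  rcases hφ with hφ | hφ
  · revert φ
    simp only [IRAstarAxioms, List.forall_mem_cons]
    simp [Ar_alls, Ar, vZ, vE, vS, vA, vM, arithSlot, PFml.not]
  · simp only [List.mem_cons, List.not_mem_nil, or_false] at hφ
    rcases hφ with rfl | rfl | rfl
    · simp [A26, Ar_alls, Ar, hG, Ar_msub, vE, arithSlot]
    · simp [A27, Ar_alls, Ar, hG, hB, Ar_msub, arithSlot, PFml.not, PFml.iff, B40, Hfml, vZ,
        Ar_leF]
    · simp [A28, Ar_alls, Ar, hB, PFml.not]

theorem fv_bigAnd (l : List PFml) (hl : ∀ φ ∈ l, φ.fv = ∅) : (bigAnd l).fv = ∅ := by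
  induction l with
  | nil => rfl
  | cons a l ih =>
    rw [List.forall_mem_cons] at hl
    show a.fv ∪ (bigAnd l).fv = ∅
    rw [hl.1, ih hl.2]; rfl

theorem fv_IRA : ∀ φ ∈ IRAstarAxioms, φ.fv = ∅ := by
  simp only [IRAstarAxioms, List.forall_mem_cons]
  refine ⟨?_, ?_, ?_, ?_, ?_, ?_, ?_, ?_, ?_, ?_, ?_, ?_, ?_, ?_, ?_, ?_, ?_, ?_, ?_, ?_, ?_, ?_,
    ?_, ?_, ?_, by simp⟩ <;> decide

theorem fv_Q (hGfv : G.fv ⊆ {0, 1, 2}) (hBfv : B.fv ⊆ {0, 1}) : (Qfml G B).fv = ∅ := by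
  apply fv_bigAnd
  intro φ hφ
  rw [List.mem_append] at hφ
  rcases hφ with hφ | hφ
  · exact fv_IRA φ hφ
  have hG3 : ∀ v ∈ G.fv, v = 0 ∨ v = 1 ∨ v = 2 := fun v hv => by simpa using hGfv hv
  have hB2 : ∀ v ∈ B.fv, v = 0 ∨ v = 1 := fun v hv => by simpa using hBfv hv
  simp only [List.mem_cons, List.not_mem_nil, or_false] at hφ
  rw [Finset.eq_empty_iff_forall_notMem]
  rcases hφ with rfl | rfl | rfl
  · intro v hv
    simp only [A26, fv_alls, PFml.fv, vE, Finset.mem_sdiff, Finset.mem_union, PTerm.fv,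
      List.foldr, List.mem_toFinset, List.mem_cons, Finset.mem_singleton, Finset.notMem_empty,
      List.not_mem_nil, or_false] at hv
    obtain ⟨(h | h) | h, hn⟩ := hv
    · have := hG3 v h; tauto
    · obtain ⟨u, hu, hv⟩ := PFml.fv_msub _ h
      rcases hG3 u hu with rfl | rfl | rfl <;> simp [sub1, PTerm.fv] at hv <;> tauto
    · tauto
  · intro v hv
    have e1 : v ∈ (B40 B).fv → v = 4 ∨ v = 0 := by
      intro h
      obtain ⟨u, hu, hv⟩ := PFml.fv_msub _ h
      rcases hB2 u hu with rfl | rfl <;> simp [PTerm.fv] at hv <;> tauto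
    have e2 : v ∈ (Hfml G).fv → v = 1 ∨ v = 0 := by
      intro h
      simp only [Hfml, PFml.fv, Finset.mem_erase, Finset.mem_union, vZ, PTerm.fv, List.foldr,
        Finset.mem_singleton, Finset.notMem_empty, or_false] at h
      obtain ⟨h5, h | h⟩ := h
      · exact absurd h h5
      · obtain ⟨u, hu, hv⟩ := PFml.fv_msub _ h
        rcases hG3 u hu with rfl | rfl | rfl <;> simp [PTerm.fv] at hv <;> tauto
    simp only [A27, fv_alls, PFml.fv, PFml.not, PFml.iff, leF, vA, Finset.mem_sdiff,
      Finset.mem_union, Finset.mem_erase, PTerm.fv,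
      List.foldr, List.mem_toFinset, List.mem_cons, Finset.mem_singleton, Finset.notMem_empty,
      List.not_mem_nil, or_false] at hv
    tauto
  · intro v hv
    simp only [A28, fv_alls, PFml.fv, PFml.not, Finset.mem_sdiff, Finset.mem_union,
      List.mem_toFinset, List.mem_cons, Finset.notMem_empty,
      List.not_mem_nil, or_false] at hv
    have := hB2 v
    tauto

/-- The instance of the equality axiom for `Q2`. -/
def eqQ2 (G : PFml) : PFml :=
  alls [0, 1, 2, 3] ((bigAnd [vE (.var 0) (.var 2), vE (.var 1) (.var 3)]).imp
    ((Q2 G (.var 0) (.var 1)).imp (Q2 G (.var 2) (.var 3))))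

/-- The instance of the equality axiom for `⊥`. -/
def eqBot : PFml := alls [0, 1] ((bigAnd [vE (.var 0) (.var 1)]).imp (PFml.bot.imp .bot))

/-- Premise of the instance of `nCT`. -/
def prem (G : PFml) : PFml := .all 0 (PFml.bot.not.imp (.ex 1 (Q2 G (.var 0) (.var 1))))

/-- Matrix of the conclusion of the instance of `nCT`. -/
def conc (G : PFml) : PFml := .all 0 (PFml.bot.not.imp
  (.ex 1 ((G.msub (tri (.var 2) (.var 0) (.var 1))).and (Q2 G (.var 0) (.var 1)))))

theorem Q2_argSub (hGfv : G.fv ⊆ {0, 1, 2}) (hGbv : ∀ v ∈ G.bv, 10 ≤ v) (a b : PTerm) :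
    (Q2 G (.var 0) (.var 1)).msub (argSub [a, b]) = Q2 G a b := by
  rw [Q2_msub hGfv hGbv (lt_var (by omega))]; rfl

theorem isInstance_nCT (hGfv : G.fv ⊆ {0, 1, 2}) (hGbv : ∀ v ∈ G.bv, 10 ≤ v)
    (hG : Ar G) (hB : Ar B) :
    IsInstance (nCTstar G B)
      (((Qfml G B).and (eqBot.and (eqQ2 G))).imp ((prem G).imp (.ex 2 (conc G)))) := by
  have hq : ∀ x n i, x ∉ (sig G n i).fv \ Finset.range n := fun x n i => sig_fv hGfv n i x
  have hE : ∀ a b : PTerm, (vE a b).AcceptableP (sig G) := fun a b => accept_Ar hGfv _ (by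
    simp [Ar, vE, arithSlot])
  have hf : ∀ k l : ℕ, k < 7 → l < 7 →
      (PFml.atom 2 [.var k, .var l]).AcceptableP (sig G) := by
    intro k l hk hl
    show (Q2 G (.var 0) (.var 1)).FreeForM _
    apply Q2_freeFor hGbv
    intro v
    unfold argSub
    split_ifs with h
    · right
      have : v = 0 ∨ v = 1 := by simp at h; omega
      rcases this with rfl | rfl
      · exact lt_var hk
      · exact lt_var hl
    · left; rfl
  refine ⟨sig G, ?_, ?_⟩
  · refine ⟨⟨accept_Ar hGfv _ (Ar_Q hG hB), ?_, ?_⟩, ?_⟩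
    · exact ⟨fun n i _ => hq _ n i, fun n i _ => hq _ n i, ⟨hE _ _, trivial, trivial⟩,
        trivial, trivial⟩
    · exact ⟨fun n i _ => hq _ n i, fun n i _ => hq _ n i, fun n i _ => hq _ n i,
        fun n i _ => hq _ n i, ⟨hE _ _, hE _ _, trivial, trivial⟩,
        hf 0 1 (by omega) (by omega), hf 2 3 (by omega) (by omega)⟩
    · exact ⟨⟨fun n i _ => hq _ n i, ⟨trivial, trivial⟩, fun n i _ => hq _ n i,
        hf 0 1 (by omega) (by omega)⟩, fun n i _ => hq _ n i, fun n i _ => hq _ n i,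
        ⟨trivial, trivial⟩, fun n i _ => hq _ n i,
        accept_Ar hGfv _ ((Ar_msub _ _).2 hG), hf 0 1 (by omega) (by omega)⟩
  · have e1 : (Qfml G B).substP (sig G) = Qfml G B := substP_Ar _ (Ar_Q hG hB)
    have e2 : (eqAx 1 1).substP (sig G) = eqBot := rfl
    have e3 : (eqAx 2 2).substP (sig G) = eqQ2 G := by
      have : (eqAx 2 2).substP (sig G) =
          alls [0, 1, 2, 3] ((bigAnd [vE (.var 0) (.var 2), vE (.var 1) (.var 3)]).imp
          (((Q2 G (.var 0) (.var 1)).msub (argSub [.var 0, .var 1])).imp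
            ((Q2 G (.var 0) (.var 1)).msub (argSub [.var 2, .var 3])))) := rfl
      rw [this, Q2_argSub hGfv hGbv, Q2_argSub hGfv hGbv]; rfl
    have e4 : (nCTfml G).substP (sig G) = (prem G).imp (.ex 2 (conc G)) := by
      have : (nCTfml G).substP (sig G) =
        (PFml.all 0 (PFml.bot.not.imp (.ex 1 ((Q2 G (.var 0) (.var 1)).msub
          (argSub [.var 0, .var 1]))))).imp (.ex 2 (.all 0 (PFml.bot.not.imp
          (.ex 1 ((Gzxy G).substP (sig G) |>.and ((Q2 G (.var 0) (.var 1)).msub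
            (argSub [.var 0, .var 1]))))))) := rfl
      rw [this, Q2_argSub hGfv hGbv, substP_Ar (Gzxy G) ((Ar_msub _ _).2 hG)]; rfl
    simp only [nCTstar, PFml.substP, e1, e2, e3, e4]

/-! The derivation of `Ψ*` -/

theorem notMem_closed {Γ : List PFml} (hcl : ∀ ψ ∈ Γ, ψ.fv = ∅) (x : ℕ) : ∀ ψ ∈ Γ, x ∉ ψ.fv := by
  intro ψ hψ; rw [hcl ψ hψ]; simp

theorem MQC.d_refl {Γ : List PFml} (hQ : Qfml G B ∈ Γ) (hcl : ∀ ψ ∈ Γ, ψ.fv = ∅) :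
    MQC G B Γ reflE := by
  refine .allI ?_ (notMem_closed hcl 0)
  have h1 : MQC G B Γ (.all 0 (.ex 1 (vS (.var 0) (.var 1)))) := MQC.qAx hQ 16 (by decide)
  refine .exE (MQC.allE_self h1) ?_ (by decide) (notMem_closed hcl 1)
  have h2 : MQC G B (vS (.var 0) (.var 1) :: Γ)
      (((vS (.var 0) (.var 1)).and (vS (.var 0) (.var 1))).imp (vE (.var 0) (.var 0))) :=
    MQC.qInst (List.mem_cons_of_mem _ hQ) 0 (by decide) 3
      (((vS (.var 0) (.var 2)).and (vS (.var 1) (.var 2))).imp (vE (.var 0) (.var 1)))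
      rfl (by decide) (by decide) (argSub [.var 0, .var 0, .var 1])
  exact .impE h2 (.andI (.hyp (by simp)) (.hyp (by simp)))

theorem MQC.d_zero {Γ : List PFml} (hQ : Qfml G B ∈ Γ) (hcl : ∀ ψ ∈ Γ, ψ.fv = ∅) :
    MQC G B Γ (.ex 1 (vZ (.var 1))) := by
  have h1 : MQC G B Γ (.ex 0 (vZ (.var 0))) := MQC.qAx hQ 13 (by decide)
  refine .exE h1 ?_ (by decide) (notMem_closed hcl 0)
  exact .exI (φ := vZ (.var 1)) (.var 0) (.hyp (List.mem_cons_self ..)) trivial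

theorem MQC.d_one {Γ : List PFml} (hQ : Qfml G B ∈ Γ) (hcl : ∀ ψ ∈ Γ, ψ.fv = ∅) :
    MQC G B Γ (.ex 1 (vZ (.var 1)).not) := by
  have h1 : MQC G B Γ (.ex 0 (vZ (.var 0))) := MQC.qAx hQ 13 (by decide)
  refine .exE h1 ?_ (by decide) (notMem_closed hcl 0)
  have h2 : MQC G B (vZ (.var 0) :: Γ) (.all 0 (.ex 1 (vS (.var 0) (.var 1)))) :=
    MQC.qAx (List.mem_cons_of_mem _ hQ) 16 (by decide)
  refine .exE (MQC.allE_self h2) ?_ (by decide)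
    (List.forall_mem_cons.2 ⟨by decide, notMem_closed hcl 1⟩)
  have h3 : MQC G B (vS (.var 0) (.var 1) :: vZ (.var 0) :: Γ)
      (.all 0 (.all 1 ((vS (.var 0) (.var 1)).imp (vZ (.var 1)).not))) :=
    MQC.qAx (List.mem_cons_of_mem _ (List.mem_cons_of_mem _ hQ)) 1 (by decide)
  exact MQC.exI_self (.impE (MQC.allE_self (MQC.allE_self h3)) (.hyp (by simp)))

/-- Decidability of `Φ`. -/
def decPhi (G : PFml) : PFml := .all 0 (((PhiX G).not).or (PhiX G))

/-- Decidability of `Φ`, with another bound variable. -/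
def decPh (G : PFml) : PFml := .all 0 (((Ph G (.var 0)).not).or (Ph G (.var 0)))

theorem PhiX_fv (hGfv : G.fv ⊆ {0, 1, 2}) {v : ℕ} (hv : v ∈ (PhiX G).fv) : v = 0 := by
  have hv : v ∈ (PFml.ex 1 ((vZ (.var 1)).and (G.msub (tri (.var 0) (.var 0) (.var 1))))).fv := hv
  simp only [PFml.fv, vZ, Finset.mem_erase, Finset.mem_union] at hv
  obtain ⟨h7, hv | hv⟩ := hv
  · simp [PTerm.fv] at hv; exact absurd hv h7
  · rcases tri_fv hGfv hv with h | h | h <;> simp [PTerm.fv] at h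
    · exact h
    · exact h
    · exact absurd h h7

theorem fv_decPhi (hGfv : G.fv ⊆ {0, 1, 2}) : (decPhi G).fv = ∅ := by
  rw [Finset.eq_empty_iff_forall_notMem]
  intro v hv
  have := @PhiX_fv G hGfv v
  simp only [decPhi, PFml.fv, PFml.not, Finset.mem_erase, Finset.mem_union, Finset.notMem_empty,
    or_false] at hv
  tauto

theorem fv_decPh (hGfv : G.fv ⊆ {0, 1, 2}) : (decPh G).fv = ∅ := by
  rw [Finset.eq_empty_iff_forall_notMem]
  intro v hv
  have := @Ph_fv G hGfv (.var 0) v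
  simp only [decPh, PFml.fv, PFml.not, Finset.mem_erase, Finset.mem_union, Finset.notMem_empty,
    or_false, PTerm.fv, Finset.mem_singleton] at hv this
  tauto

theorem exI_freeFor (hGbv : ∀ v ∈ G.bv, 10 ≤ v) (s : ℕ → PTerm) (x y : ℕ) (hy : y < 10) (z : ℕ) :
    ((vZ (.var z)).and (G.msub s)).FreeForM (sub1 x (.var y)) := by
  apply PFml.freeFor_of
  intro v _
  by_cases h : v = x
  · right
    simp only [sub1, h, if_true, PTerm.fv, Finset.mem_singleton, forall_eq, PFml.bv, vZ,
      PFml.bv_msub, Finset.empty_union]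
    intro h'; have := hGbv _ h'; omega
  · left; simp [sub1, h]

/-- Introduction of `Ph`. -/
theorem MQC.phI (hGfv : G.fv ⊆ {0, 1, 2}) (hGbv : ∀ v ∈ G.bv, 10 ≤ v) {Γ : List PFml} {k y : ℕ}
    (hk : k < 7) (hy : y < 10) (h1 : MQC G B Γ (vZ (.var y)))
    (h2 : MQC G B Γ (G.msub (tri (.var k) (.var k) (.var y)))) :
    MQC G B Γ (Ph G (.var k)) := by
  refine .exI (.var y) ?_ (exI_freeFor hGbv _ _ _ hy _)
  refine .andI (ψ := (G.msub (tri (.var k) (.var k) (.var 7))).msub (sub1 7 (.var y))) h1 ?_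
  rw [tri_msub hGfv hGbv (lt_var (by omega)) (lt_var (by omega)) (lt_var (by omega))]
  simpa [PTerm.msub, sub1, show k ≠ 7 by omega] using h2

/-- Introduction of `PhiX`. -/
theorem MQC.phiI (hGfv : G.fv ⊆ {0, 1, 2}) (hGbv : ∀ v ∈ G.bv, 10 ≤ v) {Γ : List PFml} {y : ℕ}
    (hy : y < 10) (h1 : MQC G B Γ (vZ (.var y)))
    (h2 : MQC G B Γ (G.msub (tri (.var 0) (.var 0) (.var y)))) :
    MQC G B Γ (PhiX G) := by
  refine .exI (.var y) ?_ (exI_freeFor hGbv _ _ _ hy _)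
  refine .andI (ψ := (G.msub (tri (.var 0) (.var 0) (.var 1))).msub (sub1 1 (.var y))) h1 ?_
  rw [tri_msub hGfv hGbv (lt_var (by omega)) (lt_var (by omega)) (lt_var (by omega))]
  simpa [PTerm.msub, sub1] using h2

theorem MQC.d_dec (hGfv : G.fv ⊆ {0, 1, 2}) (hGbv : ∀ v ∈ G.bv, 10 ≤ v) {Γ : List PFml}
    (hD : decPhi G ∈ Γ) (hcl : ∀ ψ ∈ Γ, ψ.fv = ∅) : MQC G B Γ (decPh G) := by
  refine .allI ?_ (notMem_closed hcl 0)
  have hP : ∀ x, x ≠ 0 → x ∉ (PhiX G).fv := fun x hx h => hx (PhiX_fv hGfv h)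
  have hP' : ∀ x, x ≠ 0 → x ∉ (Ph G (.var 0)).fv := fun x hx h => hx (by
    simpa [PTerm.fv] using Ph_fv hGfv h)
  refine .orE (MQC.allE_self (.hyp hD)) ?_ ?_
  · refine .orI1 (.impI ?_)
    refine .exE (x := 7) (φ := (vZ (.var 7)).and (G.msub (tri (.var 0) (.var 0) (.var 7))))
      (.hyp (by simp [Ph])) ?_ (by simp [PFml.fv]) ?_
    · refine .impE (φ := PhiX G) (.hyp (by simp [PFml.not])) ?_
      exact MQC.phiI hGfv hGbv (y := 7) (by omega) (.andE1 (.hyp (List.mem_cons_self ..)))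
        (.andE2 (.hyp (List.mem_cons_self ..)))
    · simp only [List.forall_mem_cons]
      refine ⟨hP' 7 (by omega), ?_, notMem_closed hcl 7⟩
      simpa [PFml.not, PFml.fv] using hP 7 (by omega)
  · refine .orI2 ?_
    refine .exE (x := 1) (φ := (vZ (.var 1)).and (G.msub (tri (.var 0) (.var 0) (.var 1))))
      (.hyp (List.mem_cons_self ..)) ?_ (hP' 1 (by omega)) ?_
    · exact MQC.phI hGfv hGbv (y := 1) (by omega) (by omega) (.andE1 (.hyp (List.mem_cons_self ..)))
        (.andE2 (.hyp (List.mem_cons_self ..)))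
    · simp only [List.forall_mem_cons]
      exact ⟨hP 1 (by omega), notMem_closed hcl 1⟩

theorem MQC.d_eqQ2 (hGfv : G.fv ⊆ {0, 1, 2}) (hGbv : ∀ v ∈ G.bv, 10 ≤ v) (hG : Ar G)
    {Γ : List PFml} (hQ : Qfml G B ∈ Γ) (hR : reflE ∈ Γ) (hcl : ∀ ψ ∈ Γ, ψ.fv = ∅) :
    MQC G B Γ (eqQ2 G) := by
  refine MQC.allIs _ (.impI ?_) (fun x _ => notMem_closed hcl x)
  have := MQC.cong (List.mem_cons_of_mem
    (bigAnd [vE (.var 0) (.var 2), vE (.var 1) (.var 3)]) hQ) (List.mem_cons_of_mem _ hR)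
    (Q2 G (.var 0) (.var 1)) (Ar_Q2 hG _ _) (by
      intro x hx
      have hx7 := Q2_bv hGbv hx
      refine List.forall_mem_cons.2 ⟨?_, notMem_closed hcl x⟩
      simp [bigAnd, PFml.fv, vE, PTerm.fv]
      omega) (argSub [.var 0, .var 1]) (argSub [.var 2, .var 3]) (by
      intro v hv
      have : v = 0 ∨ v = 1 := by
        rcases Q2_fv hGfv hv with h | h <;> simp [PTerm.fv] at h <;> omega
      rcases this with rfl | rfl
      · exact MQC.bigAnd_mem (l := [vE (.var 0) (.var 2), vE (.var 1) (.var 3)])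
          (List.mem_cons_self ..) (.hyp (List.mem_cons_self ..))
      · exact MQC.bigAnd_mem (l := [vE (.var 0) (.var 2), vE (.var 1) (.var 3)])
          (List.mem_cons_of_mem _ (List.mem_cons_self ..)) (.hyp (List.mem_cons_self ..)))
  rwa [Q2_argSub hGfv hGbv, Q2_argSub hGfv hGbv] at this

theorem MQC.d_prem (hGfv : G.fv ⊆ {0, 1, 2}) {Γ : List PFml} (h0 : .ex 1 (vZ (.var 1)) ∈ Γ)
    (h1 : .ex 1 (vZ (.var 1)).not ∈ Γ) (hD : decPh G ∈ Γ) (hcl : ∀ ψ ∈ Γ, ψ.fv = ∅) :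
    MQC G B Γ (prem G) := by
  refine .allI (.impI ?_) (notMem_closed hcl 0)
  have hP : 1 ∉ (Ph G (.var 0)).fv := fun h => by
    have := Ph_fv hGfv h
    simp [PTerm.fv] at this
  refine .orE (MQC.allE_self (.hyp (List.mem_cons_of_mem _ hD))) ?_ ?_
  · refine .exE (.hyp (List.mem_cons_of_mem _ (List.mem_cons_of_mem _ h0))) ?_
      (by simp [PFml.fv]) ?_
    · exact MQC.exI_self (.orI1 (.andI (.hyp (by simp)) (.hyp (by simp))))
    · simp only [List.forall_mem_cons]
      exact ⟨by simpa [PFml.fv, PFml.not] using hP, by simp [PFml.fv, PFml.not],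
        notMem_closed hcl 1⟩
  · refine .exE (.hyp (List.mem_cons_of_mem _ (List.mem_cons_of_mem _ h1))) ?_
      (by simp [PFml.fv]) ?_
    · exact MQC.exI_self (.orI2 (.andI (.hyp (by simp)) (.hyp (by simp))))
    · simp only [List.forall_mem_cons]
      exact ⟨hP, by simp [PFml.fv, PFml.not], notMem_closed hcl 1⟩

theorem MQC.a26 (hGfv : G.fv ⊆ {0, 1, 2}) (hGbv : ∀ v ∈ G.bv, 10 ≤ v) {Γ : List PFml}
    (hQ : Qfml G B ∈ Γ) (a b c d : ℕ) (ha : a < 10) (hb : b < 10) (hc : c < 10) (hd : d < 10) :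
    MQC G B Γ (((G.msub (tri (.var a) (.var b) (.var c))).and
      (G.msub (tri (.var a) (.var b) (.var d)))).imp (vE (.var c) (.var d))) := by
  have hG3 : ∀ v ∈ G.fv, v = 0 ∨ v = 1 ∨ v = 2 := fun v hv => by simpa using hGfv hv
  have e0 : G.msub (sub1 2 (.var 3)) = G.msub (tri (.var 0) (.var 1) (.var 3)) := by
    apply PFml.msub_congr
    intro v hv
    rcases hG3 v hv with rfl | rfl | rfl <;> rfl
  have h1 : MQC G B Γ (A26 G) := MQC.bigAnd_mem (List.mem_append_right _ (by simp)) (.hyp hQ)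
  have h2 := MQC.instN (argSub [.var a, .var b, .var c, .var d]) [0, 1, 2, 3] _ (by decide) (by
      intro v hv
      simp only [PFml.fv, Finset.mem_union] at hv
      rcases hv with (h | h) | h
      · have := hG3 v h; simp; omega
      · rw [e0] at h
        rcases tri_fv hGfv h with h | h | h <;> simp [PTerm.fv] at h <;> simp [h]
      · simp [vE, PFml.fv, PTerm.fv] at h; simp; omega) (by
      intro x hx u hu h
      have h10 : 10 ≤ u := by
        apply hGbv
        simpa [PFml.bv, vE, PFml.bv_msub] using h
      have : u < 10 := by
        simp only [List.mem_cons, List.not_mem_nil, or_false] at hx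
        rcases hx with rfl | rfl | rfl | rfl
        · exact lt_var ha u hu
        · exact lt_var hb u hu
        · exact lt_var hc u hu
        · exact lt_var hd u hu
      omega) h1
  rw [e0] at h2
  simp only [PFml.msub] at h2
  rw [tri_msub hGfv hGbv (lt_var (by omega)) (lt_var (by omega)) (lt_var (by omega))] at h2
  have e1 : G.msub (argSub [.var a, .var b, .var c, .var d]) =
      G.msub (tri (.var a) (.var b) (.var c)) := by
    apply PFml.msub_congr
    intro v hv
    rcases hG3 v hv with rfl | rfl | rfl <;> rfl
  rw [e1] at h2
  exact h2

theorem MQC.d_final (hGfv : G.fv ⊆ {0, 1, 2}) (hGbv : ∀ v ∈ G.bv, 10 ≤ v) {Γ : List PFml}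
    (hQ : Qfml G B ∈ Γ) (hcl : ∀ ψ ∈ Γ, ψ.fv = ∅) (hd : MQC G B Γ (.ex 2 (conc G))) :
    MQC G B Γ .bot := by
  refine .exE hd ?_ (by simp [PFml.fv]) (notMem_closed hcl 2)
  have hbvc : ∀ v ∈ (PFml.bot.not.imp (.ex 1 ((G.msub (tri (.var 2) (.var 0) (.var 1))).and
      (Q2 G (.var 0) (.var 1))))).bv, v = 1 ∨ 7 ≤ v := by
    intro v hv
    simp only [PFml.bv, PFml.not, Finset.mem_union, Finset.mem_insert, PFml.bv_msub,
      Finset.notMem_empty, false_or] at hv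
    rcases hv with h | h | h
    · exact Or.inl h
    · have := hGbv v h; omega
    · exact Or.inr (Q2_bv hGbv h)
  have h1 := MQC.allE (G := G) (B := B) (Γ := conc G :: Γ) (x := 0) (.var 2)
    (.hyp (List.mem_cons_self ..)) (by
      apply PFml.freeFor_of
      intro v _
      by_cases h : v = 0
      · right
        simp only [sub1, h, if_true, PTerm.fv, Finset.mem_singleton, forall_eq]
        intro h'; have := hbvc _ h'; omega
      · left; simp [sub1, h])
  have e : (PFml.bot.not.imp (.ex 1 ((G.msub (tri (.var 2) (.var 0) (.var 1))).and
      (Q2 G (.var 0) (.var 1))))).msub (sub1 0 (.var 2)) =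
      PFml.bot.not.imp (.ex 1 ((G.msub (tri (.var 2) (.var 2) (.var 1))).and
      (Q2 G (.var 2) (.var 1)))) := by
    simp only [PFml.msub, PFml.not]
    rw [tri_msub hGfv hGbv (lt_var (by omega)) (lt_var (by omega)) (lt_var (by omega)),
      Q2_msub hGfv hGbv (lt_var (by omega))]
    rfl
  rw [e] at h1
  have hcfv : ∀ v ∈ (conc G).fv, v = 2 := by
    intro v hv
    simp only [conc, PFml.fv, PFml.not, Finset.mem_erase, Finset.mem_union, Finset.notMem_empty,
      false_or] at hv
    obtain ⟨hv0, hv1, h | h⟩ := hv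
    · rcases tri_fv hGfv h with h | h | h <;> simp [PTerm.fv] at h <;> tauto
    · rcases Q2_fv hGfv h with h | h <;> simp [PTerm.fv] at h <;> tauto
  refine .exE (.impE h1 (.impI (.hyp (List.mem_cons_self ..)))) ?_ (by simp [PFml.fv])
    (List.forall_mem_cons.2 ⟨fun h => by have := hcfv _ h; omega, notMem_closed hcl 1⟩)
  refine .orE (.andE2 (.hyp (List.mem_cons_self ..))) ?_ ?_
  · refine .impE (.andE1 (.hyp (List.mem_cons_self ..))) ?_
    exact MQC.phI hGfv hGbv (y := 1) (by omega) (by omega)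
      (.andE2 (.hyp (List.mem_cons_self ..)))
      (.andE1 (.hyp (List.mem_cons_of_mem _ (List.mem_cons_self ..))))
  · refine .exE (.andE1 (.hyp (List.mem_cons_self ..))) ?_ (by simp [PFml.fv]) ?_
    · refine .impE (.andE2 (.hyp (List.mem_cons_of_mem _ (List.mem_cons_self ..)))) ?_
      refine .impE (MQC.c_Z (by simp [hQ]) (.var 7) (.var 1)) (.andI ?_
        (.andE1 (.hyp (List.mem_cons_self ..))))
      refine .impE (MQC.a26 hGfv hGbv (by simp [hQ]) 2 2 7 1 (by omega) (by omega) (by omega)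
        (by omega)) (.andI (.andE2 (.hyp (List.mem_cons_self ..))) ?_)
      exact .andE1 (.hyp (List.mem_cons_of_mem _ (List.mem_cons_of_mem _ (List.mem_cons_self ..))))
    · have hp : 7 ∉ (Ph G (.var 2)).fv := fun h => by
        have := Ph_fv hGfv h
        simp [PTerm.fv] at this
      simp only [List.forall_mem_cons]
      refine ⟨?_, ?_, ?_, notMem_closed hcl 7⟩
      · intro h
        simp only [PFml.fv, Finset.mem_union] at h
        rcases h with h | h
        · exact hp h
        · simp [PFml.not, PFml.fv, vZ, PTerm.fv] at h
      · intro h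
        simp only [PFml.fv, Finset.mem_union] at h
        rcases h with h | h
        · rcases tri_fv hGfv h with h | h | h <;> simp [PTerm.fv] at h
        · rcases Q2_fv hGfv h with h | h <;> simp [PTerm.fv] at h
      · intro h; have := hcfv _ h; omega

theorem MQC_PsiStar (hGfv : G.fv ⊆ {0, 1, 2}) (hGbv : ∀ v ∈ G.bv, 10 ≤ v) (hG : Ar G)
    (hBfv : B.fv ⊆ {0, 1}) (hB : Ar B) : MQC G B [] (PsiStar G B) := by
  refine .impI (.impI ?_)
  have c0 : ∀ ψ ∈ [decPhi G, Qfml G B], ψ.fv = ∅ := by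
    simp [fv_decPhi hGfv, fv_Q hGfv hBfv]
  show MQC G B [decPhi G, Qfml G B] .bot
  refine MQC.cut (MQC.d_refl (by simp) c0) ?_
  have c1 := (List.forall_mem_cons (p := fun ψ : PFml => ψ.fv = ∅)).2
    ⟨(by decide : reflE.fv = ∅), c0⟩
  refine MQC.cut (MQC.d_zero (by simp) c1) ?_
  have c2 := (List.forall_mem_cons (p := fun ψ : PFml => ψ.fv = ∅)).2
    ⟨(by decide : (PFml.ex 1 (vZ (.var 1))).fv = ∅), c1⟩
  refine MQC.cut (MQC.d_one (by simp) c2) ?_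
  have c3 := (List.forall_mem_cons (p := fun ψ : PFml => ψ.fv = ∅)).2
    ⟨(by decide : (PFml.ex 1 (vZ (.var 1)).not).fv = ∅), c2⟩
  refine MQC.cut (MQC.d_dec hGfv hGbv (by simp) c3) ?_
  have c4 := (List.forall_mem_cons (p := fun ψ : PFml => ψ.fv = ∅)).2 ⟨fv_decPh hGfv, c3⟩
  refine MQC.d_final hGfv hGbv (by simp) c4 ?_
  refine .impE (.impE (.axCT (isInstance_nCT hGfv hGbv hG hB)) (.andI (.hyp (by simp))
    (.andI ?_ ?_))) ?_
  · exact MQC.allIs _ (.impI (.impI (.hyp (List.mem_cons_self ..)))) fun x _ => notMem_closed c4 x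
  · exact MQC.d_eqQ2 hGfv hGbv hG (by simp) (by simp) c4
  · exact MQC.d_prem hGfv (by simp) (by simp) (by simp) c4

end Deriv
end Cpc

/-- the predicate formula `Ψ* = (Q → Ψ)`, where `Ψ` is
`¬∀x(¬Φ(x) ∨ Φ(x))` with `Φ(x) = ∃y(Z(y) & G(x,x,y))`, is deducible in `MQC` but not
in the classical predicate calculus `CQC`. -/
theorem MQC_proves_nonclassical_formula (G B : Cpc.PFml)
    (hGfv : G.fv ⊆ {0, 1, 2}) (hGbv : ∀ v ∈ G.bv, 10 ≤ v) (hGsig : Cpc.IsSigma G)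
    (hGdef : ∀ ρ : ℕ → ℕ, Cpc.TrueStd ρ G ↔ Cpc.K (ρ 0) (ρ 1) = Part.some (ρ 2))
    (hBfv : B.fv ⊆ {0, 1}) (hBbv : ∀ v ∈ B.bv, 10 ≤ v) (hBsig : Cpc.IsSigma B)
    (hBdef : ∀ ρ : ℕ → ℕ, Cpc.TrueStd ρ B ↔ Cpc.g (ρ 0) (ρ 1) = 1) :
    Cpc.MQC G B [] (Cpc.PsiStar G B) ∧ ¬ Cpc.CQC [] (Cpc.PsiStar G B) := by
  exact ⟨Cpc.MQC_PsiStar hGfv hGbv (Cpc.Ar_of_sigma hGsig) hBfv (Cpc.Ar_of_sigma hBsig),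
    Cpc.not_CQC_PsiStar G B hGfv hGbv hGdef hBfv hBbv hBdef⟩
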